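/- Let E be a closed subset of the unit circle 𝕋 that has Lebesgue (arc-length) measure zero. Then the set U_E of functions in H² with universal optimal polynomial approximants on E is a dense G_δ subset of the Hardy space H². -/

import Mathlib

/-!
The set of universal functions is written as a countable intersection of open dense sets, and
Baire's theorem is applied in the complete space `H2`.  For `g : C(E, ℂ)`, `ε > 0` and `N`, let
`nearSet E g ε N` be the set of nonzero `f` having an optimal approximant of order `n ≥ N` at
distance less than `ε` from `g` on `E`.  It is open because, by Cramer's rule for the normal
equations, the coefficients of `opa n f` are continuous in `f ≠ 0` (`continuousOn_opa`).  Letting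
`g` run through a dense sequence of `C(E, ℂ)` gives the universal functions (`universal_iff`).

Density (`exists_universal_approx`) rests on four facts.

* If `F` is analytic and zero free on a neighbourhood of the closed disc, then `opa n F → 1 / F`
  uniformly on the closed disc (`opa_tendsto`).
* Every `f₀` is close in norm to a polynomial `p` without zeros on the circle and at `0`
  (`exists_polynomial`).  Reflecting the zeros of `p` in the disc across the circle gives a zero
  free `P` with `|p| = |P|` on the circle (`exists_outer`), and then, for every `γ`, the optimal
  approximants of `p γ` are a constant multiple of those of `P γ` (`opa_of_norm`): the normal
  equations involve only `|p|` on the circle and the value at `0`.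
* A null compact subset `E` of the circle is totally disconnected, so a continuous function on it
  is uniformly close to a function `exp (-a)` with `a` locally constant (`exists_partition`).
* A locally constant `a` on `E` is uniformly close on `E` to a function `v` which is analytic across
  the circle, small in `H²`, and bounded on the disc independently of how close
  (`exists_approx_of_partition`).  It is a combination of peak functions (`exists_peak`), built from
  a cover of a piece of `E` by discs with small total radius.

The function `p * exp v` is then close to `p`, since `exp v - 1` is small in `H²`, while its optimal
approximants tend on `E` to a constant multiple of `exp (-v) / P`, where `exp (-v)` can be
prescribed.
-/

open MeasureTheory Filter Metric Polynomial

noncomputable section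

/-- The Hardy space `H²`, modelled as the space `ℓ²(ℕ, ℂ)` of square-summable
Taylor-coefficient sequences: `f : H2` represents the holomorphic function
`z ↦ ∑ₖ f k * z ^ k` on the unit disc, and the `lp`-norm of `f` is its `H²` norm. -/
abbrev H2 := lp (fun _ : ℕ => ℂ) 2

/-- Value at `z` of the holomorphic function with Taylor coefficients `f`. -/
def h2Val (f : H2) (z : ℂ) : ℂ := ∑' k, f k * z ^ k

/-- `n`-th Taylor coefficient of the product of a polynomial `q` with the power series
having coefficients `a`. -/
def coeffMul (q : Polynomial ℂ) (a : ℕ → ℂ) (n : ℕ) : ℂ :=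
  ∑ j ∈ Finset.range (n + 1), q.coeff j * a (n - j)

/-- Taylor coefficients of `q·f − 1`. -/
def errSeq (q : Polynomial ℂ) (f : H2) (n : ℕ) : ℂ :=
  coeffMul q (fun k => f k) n - if n = 0 then 1 else 0

/-- The `H²` norm `‖q·f − 1‖_{H²}`. -/
def h2ErrNorm (q : Polynomial ℂ) (f : H2) : ℝ :=
  Real.sqrt (∑' n, ‖errSeq q f n‖ ^ 2)

/-- `Q` is an optimal polynomial approximant of order `n` of `1/f`: it has degree at
most `n` and minimizes `‖q·f − 1‖_{H²}` over all polynomials `q` of degree at most `n`. -/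
def IsOpa (n : ℕ) (f : H2) (Q : Polynomial ℂ) : Prop :=
  Q.degree ≤ (n : WithBot ℕ) ∧
    ∀ q : Polynomial ℂ, q.degree ≤ (n : WithBot ℕ) → h2ErrNorm Q f ≤ h2ErrNorm q f

open Classical in
/-- The optimal polynomial approximant `Q_n(1/f)` (well defined whenever the minimizer
exists and is unique, which is the case for every `f ≠ 0`). -/
def opa (n : ℕ) (f : H2) : Polynomial ℂ :=
  if h : ∃! Q : Polynomial ℂ, IsOpa n f Q then h.choose else 0

/-- Sup-distance of two functions over a set `E` (the distance in `C(E)`). -/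
def supDist (E : Set ℂ) (u v : ℂ → ℂ) : ℝ := ⨆ z : E, ‖u z - v z‖

/-- `f` has universal optimal polynomial approximants on `E`: every continuous function
on `E` is the uniform limit on `E` of a subsequence of the sequence `Q_n(1/f)`. -/
def HasUniversalOpa (E : Set ℂ) (f : H2) : Prop :=
  ∀ g : ℂ → ℂ, ContinuousOn g E →
    ∃ m : ℕ → ℕ, StrictMono m ∧
      TendstoUniformlyOn (fun s z => (opa (m s) f).eval z) g atTop E

/-- `E ⊆ 𝕋` has arc-length (Lebesgue) measure zero. -/
def circleNull (E : Set ℂ) : Prop :=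
  volume {θ : ℝ | Complex.exp (θ * Complex.I) ∈ E} = 0

/-! ### Multiplication by polynomials and the normal equations -/

theorem h2_norm_sq (x : H2) : HasSum (fun n => ‖x n‖ ^ 2) (‖x‖ ^ 2) := by
  have := lp.hasSum_norm (p := 2) (by norm_num) x
  simpa using this

theorem memlp_of_summable {a : ℕ → ℂ} (h : Summable fun n => ‖a n‖ ^ 2) :
    Memℓp (E := fun _ : ℕ => ℂ) a 2 :=
  memℓp_gen (by simpa using h)

theorem h2_ext {x y : H2} (h : ∀ n, x n = y n) : x = y := by
  apply lp.ext; funext n; exact h n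

/-- Right shift of a sequence, with `0` inserted in front. -/
def shiftSeq (a : ℕ → ℂ) : ℕ → ℂ
  | 0 => 0
  | n + 1 => a n

theorem shiftSeq_hasSum {a : ℕ → ℂ} {s : ℝ} (h : HasSum (fun n => ‖a n‖ ^ 2) s) :
    HasSum (fun n => ‖shiftSeq a n‖ ^ 2) s := by
  rw [← hasSum_nat_add_iff' 1]
  simpa [shiftSeq] using h

/-- Multiplication by `z` on the Hardy space, acting on Taylor coefficients as the right shift. -/
def shift : H2 →ₗᵢ[ℂ] H2 where
  toFun x := ⟨shiftSeq x, memlp_of_summable (shiftSeq_hasSum (h2_norm_sq x)).summable⟩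
  map_add' x y := by
    apply h2_ext; intro n
    change shiftSeq _ n = shiftSeq _ n + shiftSeq _ n
    cases n <;> simp [shiftSeq]
  map_smul' c x := by
    apply h2_ext; intro n; cases n <;> simp [shiftSeq]
  norm_map' x := by
    have h1 := h2_norm_sq (⟨shiftSeq x, memlp_of_summable
      (shiftSeq_hasSum (h2_norm_sq x)).summable⟩ : H2)
    have h2 := h1.unique (shiftSeq_hasSum (h2_norm_sq x))
    exact (pow_left_inj₀ (norm_nonneg _) (norm_nonneg _) two_ne_zero).1 h2

@[simp] theorem shift_zero (x : H2) : shift x 0 = 0 := rfl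
@[simp] theorem shift_succ (x : H2) (n : ℕ) : shift x (n + 1) = x n := rfl

/-- The constant function `1`, as an element of the Hardy space. -/
def e0 : H2 := lp.single 2 0 1

theorem e0_apply (n : ℕ) : e0 n = if n = 0 then 1 else 0 := by
  rw [e0, lp.single_apply, Pi.single_apply]

/-- Multiplication by the polynomial `q` on the Hardy space, as the polynomial `q` evaluated at the
shift operator. -/
def pmul (q : ℂ[X]) : H2 →L[ℂ] H2 := aeval shift.toContinuousLinearMap q

theorem pmul_mul (p q : ℂ[X]) (x : H2) : pmul (p * q) x = pmul p (pmul q x) := by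
  simp [pmul]

theorem pmul_add (p q : ℂ[X]) (x : H2) : pmul (p + q) x = pmul p x + pmul q x := by
  simp [pmul]

theorem pmul_sub (p q : ℂ[X]) (x : H2) : pmul (p - q) x = pmul p x - pmul q x := by
  simp [pmul]

@[simp] theorem pmul_X (x : H2) : pmul X x = shift x := by
  simp [pmul]

@[simp] theorem pmul_C (c : ℂ) (x : H2) : pmul (C c) x = c • x := by
  simp [pmul, Algebra.algebraMap_eq_smul_one]

@[simp] theorem pmul_one (x : H2) : pmul 1 x = x := by
  simp [pmul]

theorem pmul_comm (p q : ℂ[X]) (x : H2) : pmul p (pmul q x) = pmul q (pmul p x) := by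
  rw [← pmul_mul, mul_comm, pmul_mul]

theorem pmul_C_mul (c : ℂ) (q : ℂ[X]) (x : H2) : pmul (C c * q) x = c • pmul q x := by
  rw [pmul_mul, pmul_C]

/-- The Taylor coefficients of `pmul q x` are the Cauchy products `coeffMul`. -/
theorem coeff_pmul (q : ℂ[X]) (x : H2) (n : ℕ) : pmul q x n = coeffMul q (fun k => x k) n := by
  have key : ∀ (q : ℂ[X]) (n : ℕ), coeffMul q (fun k => x k) n =
      PowerSeries.coeff n ((q : PowerSeries ℂ) * PowerSeries.mk fun k => x k) := by
    intro q n
    rw [PowerSeries.coeff_mul, Finset.Nat.sum_antidiagonal_eq_sum_range_succ_mk]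
    simp [coeffMul]
  rw [key]
  induction q using Polynomial.induction_on generalizing n with
  | C a => simp
  | add p q hp hq => simp [pmul_add, hp, hq, add_mul]
  | monomial m a ih =>
    have e : (C a * X ^ (m + 1) : ℂ[X]) = X * (C a * X ^ m) := by ring
    rw [e, pmul_mul, pmul_X, Polynomial.coe_mul, Polynomial.coe_X, mul_assoc]
    cases n with
    | zero => simp
    | succ n => rw [shift_succ, ih, PowerSeries.coeff_succ_X_mul]

theorem pmul_zero_coeff (q : ℂ[X]) (x : H2) : pmul q x 0 = q.eval 0 * x 0 := by
  rw [coeff_pmul]; simp [coeffMul, Polynomial.coeff_zero_eq_eval_zero]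

/-- Power series over `ℂ` have no zero divisors. -/
theorem pmul_inj {x : H2} (hx : x ≠ 0) {q : ℂ[X]} (h : pmul q x = 0) : q = 0 := by
  have h1 : (q : PowerSeries ℂ) * PowerSeries.mk (fun k => x k) = 0 := by
    ext n
    have := coeff_pmul q x n
    rw [h] at this
    rw [PowerSeries.coeff_mul, Finset.Nat.sum_antidiagonal_eq_sum_range_succ_mk]
    simpa [coeffMul] using this.symm
  rcases mul_eq_zero.1 h1 with h2 | h2
  · exact_mod_cast h2
  · exfalso; apply hx; apply h2_ext; intro n
    have := congrArg (PowerSeries.coeff n) h2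
    simpa using this

theorem h2ErrNorm_eq (q : ℂ[X]) (f : H2) : h2ErrNorm q f = ‖pmul q f - e0‖ := by
  have h1 := h2_norm_sq (pmul q f - e0)
  have h2 : ∀ n, (pmul q f - e0 : H2) n = errSeq q f n := by
    intro n; simp [errSeq, coeff_pmul, e0_apply]
  simp only [h2] at h1
  rw [h2ErrNorm, h1.tsum_eq, Real.sqrt_sq (norm_nonneg _)]

/-- The subspace of multiples `q f` with `q` of degree at most `n`. -/
def opaSpace (n : ℕ) (f : H2) : Submodule ℂ H2 :=
  (degreeLE ℂ (n : WithBot ℕ)).map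
    ({ toFun := fun q => pmul q f, map_add' := fun p q => pmul_add p q f,
       map_smul' := fun c q => by
        rw [Polynomial.smul_eq_C_mul, pmul_C_mul]; rfl } : ℂ[X] →ₗ[ℂ] H2)

theorem mem_opaSpace {n : ℕ} {f y : H2} :
    y ∈ opaSpace n f ↔ ∃ q : ℂ[X], q.degree ≤ (n : WithBot ℕ) ∧ pmul q f = y := by
  simp [opaSpace, mem_degreeLE]

instance (n : ℕ) (f : H2) : FiniteDimensional ℂ (opaSpace n f) := by
  have : FiniteDimensional ℂ (degreeLE ℂ (n : WithBot ℕ)) := by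
    rw [degreeLE_eq_span_X_pow]
    exact FiniteDimensional.span_finset _ _
  unfold opaSpace
  infer_instance

/-- The normal equations: `Q` is an optimal approximant iff `Q f - 1` is orthogonal to all multiples
`q f` with `q` of degree at most `n`. -/
theorem isOpa_iff {n : ℕ} {f : H2} {Q : ℂ[X]} :
    IsOpa n f Q ↔ Q.degree ≤ (n : WithBot ℕ) ∧ ∀ q : ℂ[X], q.degree ≤ (n : WithBot ℕ) →
      inner ℂ (pmul q f) (pmul Q f) = inner ℂ (pmul q f) e0 := by
  unfold IsOpa
  refine and_congr_right fun hQ => ?_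
  have hv : pmul Q f ∈ opaSpace n f := mem_opaSpace.2 ⟨Q, hQ, rfl⟩
  have h1 := (opaSpace n f).norm_eq_iInf_iff_inner_eq_zero (u := e0) hv
  have h2 : (∀ w ∈ opaSpace n f, inner ℂ (e0 - pmul Q f) w = 0) ↔
      ∀ q : ℂ[X], q.degree ≤ (n : WithBot ℕ) →
      inner ℂ (pmul q f) (pmul Q f) = inner ℂ (pmul q f) e0 := by
    constructor
    · intro h q hq
      have := h _ (mem_opaSpace.2 ⟨q, hq, rfl⟩)
      rw [inner_eq_zero_symm, inner_sub_right, sub_eq_zero] at this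
      exact this.symm
    · intro h w hw
      obtain ⟨q, hq, rfl⟩ := mem_opaSpace.1 hw
      rw [inner_eq_zero_symm, inner_sub_right, sub_eq_zero]
      exact (h q hq).symm
  rw [← h2, ← h1]
  have hbdd : BddBelow (Set.range fun w : opaSpace n f => ‖e0 - (w : H2)‖) :=
    ⟨0, by rintro _ ⟨w, rfl⟩; exact norm_nonneg _⟩
  constructor
  · intro h
    apply le_antisymm
    · apply le_ciInf
      rintro ⟨w, hw⟩
      obtain ⟨q, hq, rfl⟩ := mem_opaSpace.1 hw
      have := h q hq
      rw [h2ErrNorm_eq, h2ErrNorm_eq] at this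
      rwa [norm_sub_rev, norm_sub_rev e0]
    · exact ciInf_le hbdd ⟨_, hv⟩
  · intro h q hq
    rw [h2ErrNorm_eq, h2ErrNorm_eq, norm_sub_rev, norm_sub_rev _ e0, h]
    exact ciInf_le hbdd ⟨_, mem_opaSpace.2 ⟨q, hq, rfl⟩⟩

theorem exists_isOpa (n : ℕ) (f : H2) : ∃ Q, IsOpa n f Q := by
  have hm := (opaSpace n f).starProjection_apply_mem e0
  obtain ⟨Q, hQ, hQe⟩ := mem_opaSpace.1 hm
  refine ⟨Q, isOpa_iff.2 ⟨hQ, fun q hq => ?_⟩⟩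
  have := (opaSpace n f).sub_starProjection_mem_orthogonal e0
  rw [Submodule.mem_orthogonal] at this
  have := this _ (mem_opaSpace.2 ⟨q, hq, rfl⟩)
  rw [inner_sub_right, sub_eq_zero] at this
  rw [hQe, this]

theorem isOpa_unique {n : ℕ} {f : H2} (hf : f ≠ 0) {P Q : ℂ[X]} (hP : IsOpa n f P)
    (hQ : IsOpa n f Q) : P = Q := by
  rw [isOpa_iff] at hP hQ
  have hd : (P - Q).degree ≤ (n : WithBot ℕ) :=
    (degree_sub_le _ _).trans (max_le hP.1 hQ.1)
  have h : inner ℂ (pmul (P - Q) f) (pmul (P - Q) f) = (0 : ℂ) := by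
    conv_lhs => rw [pmul_sub P Q, inner_sub_right, ← pmul_sub]
    rw [hP.2 _ hd, hQ.2 _ hd, sub_self]
  rw [inner_self_eq_zero] at h
  exact sub_eq_zero.1 (pmul_inj hf h)

theorem opa_eq {n : ℕ} {f : H2} (hf : f ≠ 0) {Q : ℂ[X]} (hQ : IsOpa n f Q) : opa n f = Q := by
  have h : ∃! Q : ℂ[X], IsOpa n f Q := ⟨Q, hQ, fun P hP => isOpa_unique hf hP hQ⟩
  rw [opa, dif_pos h]
  exact isOpa_unique hf h.choose_spec.1 hQ

theorem isOpa_opa (n : ℕ) {f : H2} (hf : f ≠ 0) : IsOpa n f (opa n f) := by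
  obtain ⟨Q, hQ⟩ := exists_isOpa n f
  rwa [opa_eq hf hQ]

/-! ### Functions with absolutely convergent Taylor series -/

/-- `x` is the Taylor coefficient sequence of `F`, and this Taylor series converges absolutely
(hence uniformly) to `F` on the closed unit disc. -/
def Represents (x : H2) (F : ℂ → ℂ) : Prop :=
  Summable (fun k => ‖x k‖) ∧ ∀ z, ‖z‖ ≤ 1 → HasSum (fun k => x k * z ^ k) (F z)

namespace Represents

variable {x y : H2} {F G : ℂ → ℂ}

theorem add (hx : Represents x F) (hy : Represents y G) :
    Represents (x + y) (fun z => F z + G z) := by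
  refine ⟨(hx.1.add hy.1).of_nonneg_of_le (fun _ => norm_nonneg _) fun k => ?_, fun z hz => ?_⟩
  · simpa using norm_add_le (x k) (y k)
  · simpa [add_mul] using (hx.2 z hz).add (hy.2 z hz)

theorem smul (c : ℂ) (hx : Represents x F) : Represents (c • x) (fun z => c * F z) := by
  refine ⟨?_, fun z hz => ?_⟩
  · simpa using hx.1.mul_left ‖c‖
  · simpa [mul_assoc] using (hx.2 z hz).mul_left c

theorem sub (hx : Represents x F) (hy : Represents y G) :
    Represents (x - y) (fun z => F z - G z) := by
  simpa [sub_eq_add_neg] using hx.add (hy.smul (-1))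

theorem zero : Represents 0 (fun _ => 0) :=
  ⟨by simp, fun z _ => by simp⟩

theorem sum {ι : Type*} (s : Finset ι) {x : ι → H2} {F : ι → ℂ → ℂ}
    (h : ∀ i ∈ s, Represents (x i) (F i)) :
    Represents (∑ i ∈ s, x i) (fun z => ∑ i ∈ s, F i z) := by
  classical
  induction s using Finset.induction_on with
  | empty => simpa using zero
  | insert a s ha ih =>
    simp only [Finset.sum_insert ha]
    exact (h a (by simp)).add (ih fun i hi => h i (by simp [hi]))

theorem one : Represents e0 (fun _ => 1) := by
  have h : ∀ n ∉ ({0} : Finset ℕ), e0 n = 0 := by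
    intro n hn; rw [e0_apply, if_neg (by simpa using hn)]
  refine ⟨summable_of_ne_finset_zero (s := {0}) fun n hn => by simp [h n hn], fun z _ => ?_⟩
  have : HasSum (fun k => e0 k * z ^ k) (∑ k ∈ ({0} : Finset ℕ), e0 k * z ^ k) :=
    hasSum_sum_of_ne_finset_zero fun n hn => by simp [h n hn]
  simpa [e0_apply] using this

theorem shift (hx : Represents x F) : Represents (shift x) (fun z => z * F z) := by
  refine ⟨(summable_nat_add_iff 1).1 (by simpa using hx.1), fun z hz => ?_⟩
  rw [← hasSum_nat_add_iff' 1]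
  have := (hx.2 z hz).mul_left z
  simp only [shift_succ]
  simpa [pow_succ, mul_comm, mul_left_comm, mul_assoc] using this

theorem pmul (q : ℂ[X]) (hx : Represents x F) :
    Represents (pmul q x) (fun z => q.eval z * F z) := by
  induction q using Polynomial.induction_on with
  | C a => simpa using hx.smul a
  | add p q hp hq => simpa [pmul_add, add_mul] using hp.add hq
  | monomial m a ih =>
    have e : (C a * X ^ (m + 1) : ℂ[X]) = X * (C a * X ^ m) := by ring
    rw [e, pmul_mul, pmul_X]
    simpa [mul_assoc] using ih.shift

theorem continuousOn (hx : Represents x F) : ContinuousOn F (closedBall 0 1) := by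
  have h := continuousOn_tsum (f := fun k z => x k * z ^ k) (s := closedBall (0 : ℂ) 1)
    (fun i => by fun_prop) hx.1 (fun n z hz => ?_)
  · exact h.congr fun z hz => ((hx.2 z (by simpa using hz)).tsum_eq).symm
  · rw [norm_mul, norm_pow]
    exact mul_le_of_le_one_right (norm_nonneg _)
      (pow_le_one₀ (norm_nonneg _) (by simpa using hz))

theorem continuous_circle (hx : Represents x F) : Continuous fun θ => F (circleMap 0 1 θ) :=
  hx.continuousOn.comp_continuous (continuous_circleMap 0 1) fun θ => by simp

theorem circleIntegrable (hx : Represents x F) : CircleIntegrable (fun z => ‖F z‖ ^ 2) 0 1 :=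
  Continuous.intervalIntegrable (hx.continuous_circle.norm.pow 2) _ _

/-- Parseval's identity, deduced from the case of polynomials. -/
theorem parseval (hx : Represents x F) :
    Real.circleAverage (fun z => ‖F z‖ ^ 2) 0 1 = ‖x‖ ^ 2 := by
  set p : ℕ → ℂ[X] := fun n => ∑ k ∈ Finset.range n, Polynomial.monomial k (x k) with hp
  have hev : ∀ n z, (p n).eval z = ∑ k ∈ Finset.range n, x k * z ^ k := by
    intro n z; simp [hp, Polynomial.eval_finsetSum]
  have hco : ∀ n k, (p n).coeff k = if k < n then x k else 0 := by
    intro n k; simp [hp, Polynomial.coeff_monomial]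
  have h1 : ∀ n, Real.circleAverage (fun z => ‖(p n).eval z‖ ^ 2) 0 1 =
      ∑ k ∈ Finset.range n, ‖x k‖ ^ 2 := by
    intro n
    rw [← Polynomial.sum_sq_norm_coeff_eq_circleAverage]
    rw [Finset.sum_subset (s₂ := Finset.range n)]
    · exact Finset.sum_congr rfl fun k hk => by rw [hco, if_pos (Finset.mem_range.1 hk)]
    · intro k hk
      rw [mem_support_iff, hco] at hk
      by_contra h
      rw [if_neg (by simpa using h)] at hk
      exact hk rfl
    · intro k _ hk
      rw [notMem_support_iff.1 hk]; simp
  have h2 : Tendsto (fun n => Real.circleAverage (fun z => ‖(p n).eval z‖ ^ 2) 0 1) atTop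
      (nhds (‖x‖ ^ 2)) := by
    simp only [h1]; exact (h2_norm_sq x).tendsto_sum_nat
  refine tendsto_nhds_unique ?_ h2
  unfold Real.circleAverage
  refine Tendsto.const_smul ?_ _
  refine intervalIntegral.tendsto_integral_filter_of_dominated_convergence
    (fun _ => (∑' k, ‖x k‖) ^ 2) ?_ ?_ ?_ ?_
  · refine Eventually.of_forall fun n => Continuous.aestronglyMeasurable ?_
    have := (p n).continuous.comp (continuous_circleMap 0 1)
    exact this.norm.pow 2
  · refine Eventually.of_forall fun n => Eventually.of_forall fun θ _ => ?_
    rw [Real.norm_of_nonneg (by positivity)]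
    beta_reduce
    rw [hev]
    refine pow_le_pow_left₀ (norm_nonneg _) ?_ 2
    refine (norm_sum_le _ _).trans ?_
    simp only [norm_mul, norm_pow, norm_circleMap_zero, abs_one, one_pow, mul_one]
    exact hx.1.sum_le_tsum _ fun _ _ => norm_nonneg _
  · exact _root_.intervalIntegrable_const
  · refine Eventually.of_forall fun θ _ => ?_
    have := (hx.2 (circleMap 0 1 θ) (by simp)).tendsto_sum_nat
    simp only [hev]
    exact this.norm.pow 2

/-- A pointwise bound on the circle gives a bound for the Hardy norms, by Parseval. -/
theorem norm_le (hx : Represents x F) (hy : Represents y G) {K : ℝ} (hK : 0 ≤ K)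
    (h : ∀ z, ‖z‖ = 1 → ‖F z‖ ≤ K * ‖G z‖) : ‖x‖ ≤ K * ‖y‖ := by
  have hKy := hy.smul (K : ℂ)
  have h1 := Real.circleAverage_mono hx.circleIntegrable hKy.circleIntegrable (fun z hz => by
    refine pow_le_pow_left₀ (norm_nonneg _) ?_ 2
    simpa [abs_of_nonneg hK] using h z (by simpa using hz))
  rw [hx.parseval, hKy.parseval] at h1
  have := pow_le_pow_iff_left₀ (norm_nonneg _) (norm_nonneg _) two_ne_zero |>.1 h1
  rw [norm_smul, Complex.norm_real, Real.norm_of_nonneg hK] at this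
  exact this

theorem norm_one : ‖e0‖ = 1 := by
  rw [e0, lp.norm_single (by norm_num)]; simp

theorem norm_le_const (hx : Represents x F) {K : ℝ} (hK : 0 ≤ K)
    (h : ∀ z, ‖z‖ = 1 → ‖F z‖ ≤ K) : ‖x‖ ≤ K := by
  simpa [norm_one] using hx.norm_le one hK (by simpa using h)

/-- If `|F|² ≤ Re F` on the circle, then `‖x‖² ≤ Re F(0)`, by Parseval and the mean value property
of `Re F`. -/
theorem norm_sq_le_re (hx : Represents x F) {R : ℝ} (hR : 1 < R)
    (hF : DifferentiableOn ℂ F (ball 0 R)) (h : ∀ z, ‖z‖ = 1 → ‖F z‖ ^ 2 ≤ (F z).re) :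
    ‖x‖ ^ 2 ≤ (F 0).re := by
  have hd : DiffContOnCl ℂ F (ball 0 |1|) := by
    refine (hF.mono ?_).diffContOnCl
    rw [abs_one, closure_ball _ one_ne_zero]
    exact closedBall_subset_ball hR
  have hi : CircleIntegrable F 0 1 := Continuous.intervalIntegrable hx.continuous_circle _ _
  have hre : CircleIntegrable (fun z => (F z).re) 0 1 :=
    Continuous.intervalIntegrable (Complex.continuous_re.comp hx.continuous_circle) _ _
  have h1 := Real.circleAverage_mono hx.circleIntegrable hre
    (fun z hz => h z (by simpa using hz))
  have h2 := Complex.reCLM.circleAverage_comp_comm hi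
  rw [hd.circleAverage] at h2
  rw [hx.parseval] at h1
  exact h1.trans_eq h2

end Represents

/-- A function analytic on a disc of radius `R > 1` has absolutely convergent Taylor series on the
closed unit disc.  The weight `k + 1`, afforded by the geometric decay of the coefficients, is used
in `opa_tendsto`. -/
theorem exists_represents {F : ℂ → ℂ} {R : ℝ} (hR : 1 < R)
    (hF : DifferentiableOn ℂ F (ball 0 R)) :
    ∃ x : H2, Represents x F ∧ Summable fun k : ℕ => ((k : ℝ) + 1) * ‖x k‖ := by
  obtain ⟨r, hr1, hrR⟩ := exists_between hR
  lift r to NNReal using by linarith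
  have hr1' : (1 : NNReal) < r := by exact_mod_cast hr1
  have hp := (hF.mono (closedBall_subset_ball hrR)).hasFPowerSeriesOnBall
    (lt_trans zero_lt_one hr1')
  set p := cauchyPowerSeries F 0 r
  have hrad : ((1 : NNReal) : ENNReal) < p.radius :=
    lt_of_lt_of_le (by exact_mod_cast hr1') hp.r_le
  obtain ⟨a, ha, K, hK, hb⟩ := p.norm_mul_pow_le_mul_pow_of_lt_radius hrad
  have hb' : ∀ n, ‖p.coeff n‖ ≤ K * a ^ n := by
    intro n
    have := hb n
    rw [NNReal.coe_one, one_pow, mul_one] at this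
    rwa [FormalMultilinearSeries.norm_apply_eq_norm_coef] at this
  have hs : Summable fun k : ℕ => ((k : ℝ) + 1) * ‖p.coeff k‖ := by
    have h1 := summable_pow_mul_geometric_of_norm_lt_one 1
      (show ‖a‖ < 1 by rw [Real.norm_of_nonneg ha.1.le]; exact ha.2)
    have h0 := summable_geometric_of_lt_one ha.1.le ha.2
    refine ((h1.add h0).mul_left K).of_nonneg_of_le (fun k => by positivity) fun k => ?_
    have := mul_le_mul_of_nonneg_left (hb' k) (show (0 : ℝ) ≤ k + 1 by positivity)
    refine this.trans_eq ?_
    simp; ring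
  have hs1 : Summable fun k : ℕ => ‖p.coeff k‖ :=
    hs.of_nonneg_of_le (fun _ => norm_nonneg _) fun k =>
      le_mul_of_one_le_left (norm_nonneg _) (by linarith [(Nat.cast_nonneg k : (0:ℝ) ≤ k)])
  have hs2 : Summable fun k : ℕ => ‖p.coeff k‖ ^ 2 := by
    refine (hs1.mul_left (∑' k, ‖p.coeff k‖)).of_nonneg_of_le (fun _ => by positivity) fun k => ?_
    rw [sq]
    exact mul_le_mul_of_nonneg_right (hs1.le_tsum k fun _ _ => norm_nonneg _) (norm_nonneg _)
  refine ⟨⟨p.coeff, memlp_of_summable hs2⟩, ⟨hs1, fun z hz => ?_⟩, hs⟩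
  have hz' : z ∈ Metric.eball (0 : ℂ) (r : ENNReal) := by
    rw [Metric.eball_coe, mem_ball_zero_iff]; exact hz.trans_lt hr1
  have := hp.hasSum_sub hz'
  simpa [FormalMultilinearSeries.apply_eq_pow_smul_coeff, mul_comm] using this

/-! ### Peak functions on null sets -/

/-- A compact null subset of the circle is covered by finitely many discs centred on it whose
radii have an arbitrarily small sum. -/
theorem exists_cover {A : Set ℂ} (hA : IsCompact A) (hA1 : A ⊆ sphere 0 1) (hnull : circleNull A)
    {η : ℝ} (hη : 0 < η) :
    ∃ (t : Finset ℝ) (δ : ℝ → ℝ), (∀ x ∈ t, 0 < δ x ∧ Complex.exp (x * Complex.I) ∈ A) ∧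
      ∑ x ∈ t, δ x ≤ η ∧ ∀ z ∈ A, ∃ x ∈ t, ‖z - Complex.exp (x * Complex.I)‖ < δ x := by
  obtain ⟨t, r, htc, hts, hr, hcov, hsum⟩ :=
    Besicovitch.exists_closedBall_covering_tsum_measure_le (volume : Measure ℝ)
      (ENNReal.ofReal_pos.2 hη).ne' (fun _ => Set.Ioi 0)
      {θ : ℝ | Complex.exp (θ * Complex.I) ∈ A}
      (fun x _ δ hδ => ⟨δ / 2, half_pos hδ, half_pos hδ, half_lt_self hδ⟩)
  have hnull' : volume {θ : ℝ | Complex.exp (θ * Complex.I) ∈ A} = 0 := hnull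
  rw [hnull', zero_add] at hsum
  obtain ⟨b, hbt, hbf, hb⟩ := hA.elim_finite_subcover_image (b := t)
    (c := fun x : ℝ => ball (Complex.exp (x * Complex.I)) (2 * r x)) (fun _ _ => isOpen_ball) (by
      intro z hz
      have hz1 : ‖z‖ = 1 := by simpa using hA1 hz
      have hzarg : Complex.exp (z.arg * Complex.I) = z := by
        simpa [hz1] using Complex.norm_mul_exp_arg_mul_I z
      have hmem : z.arg ∈ ⋃ x ∈ t, closedBall x (r x) := hcov (by simpa [hzarg] using hz)
      simp only [Set.mem_iUnion, exists_prop] at hmem ⊢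
      obtain ⟨x, hx, hxz⟩ := hmem
      refine ⟨x, hx, ?_⟩
      have hrx : 0 < r x := hr x hx
      have h1 : Complex.exp (z.arg * Complex.I) - Complex.exp (x * Complex.I) =
          Complex.exp (x * Complex.I) *
            (Complex.exp (Complex.I * ((z.arg - x : ℝ) : ℂ)) - 1) := by
        rw [mul_sub, ← Complex.exp_add, mul_one]
        congr 2
        push_cast; ring
      rw [mem_ball, dist_eq_norm]
      conv_lhs => rw [← hzarg, h1, norm_mul, Complex.norm_exp_ofReal_mul_I, one_mul]
      refine (Real.norm_exp_I_mul_ofReal_sub_one_le).trans_lt ?_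
      rw [mem_closedBall, Real.dist_eq] at hxz
      rw [Real.norm_eq_abs]
      linarith)
  refine ⟨hbf.toFinset, fun x => 2 * r x, fun x hx => ?_, ?_, fun z hz => ?_⟩
  · have hx' := hbt (hbf.mem_toFinset.1 hx)
    exact ⟨mul_pos two_pos (hr x hx'), hts hx'⟩
  · have hsub : (hbf.toFinset : Set ℝ) ⊆ t := by simpa using hbt
    have hnn : ∀ x ∈ hbf.toFinset, 0 ≤ 2 * r x := fun x hx =>
      (mul_pos two_pos (hr x (hsub hx))).le
    rw [← ENNReal.ofReal_le_ofReal_iff hη.le, ENNReal.ofReal_sum_of_nonneg hnn]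
    refine le_trans ?_ hsum
    simp only [Real.volume_closedBall]
    rw [← Finset.tsum_subtype]
    exact ENNReal.tsum_mono_subtype (fun x => ENNReal.ofReal (2 * r x)) hsub
  · have := hb hz
    simp only [Set.mem_iUnion, exists_prop] at this
    obtain ⟨x, hx, h⟩ := this
    exact ⟨x, hbf.mem_toFinset.2 hx, by rwa [mem_ball, dist_eq_norm] at h⟩

theorem exists_pos_le_finset {ι : Type*} [DecidableEq ι] (t : Finset ι) (δ : ι → ℝ)
    (h : ∀ x ∈ t, 0 < δ x) :
    ∃ m > 0, ∀ x ∈ t, m ≤ δ x := by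
  induction t using Finset.induction_on with
  | empty => exact ⟨1, one_pos, by simp⟩
  | insert a s ha ih =>
    obtain ⟨m, hm, hms⟩ := ih fun x hx => h x (by simp [hx])
    refine ⟨min m (δ a), lt_min hm (h a (by simp)), fun x hx => ?_⟩
    rcases Finset.mem_insert.1 hx with rfl | hx
    · exact min_le_right _ _
    · exact (min_le_left _ _).trans (hms x hx)

theorem one_add_re_le_norm (H : ℂ) : 1 + H.re ≤ ‖1 + H‖ := by
  simpa using Complex.re_le_norm (1 + H)

/-- The map `H ↦ H / (1 + H)` sends the right half-plane into the disc with diameter `[0, 1]`, where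
`|w|² ≤ Re w`. -/
theorem norm_sq_le_re_div {H : ℂ} (h : 0 ≤ H.re) :
    ‖H / (1 + H)‖ ^ 2 ≤ (H / (1 + H)).re := by
  have h1 := one_add_re_le_norm H
  have hne : 0 < Complex.normSq (1 + H) := by
    rw [Complex.normSq_eq_norm_sq]; exact pow_pos (by linarith) 2
  rw [← Complex.normSq_eq_norm_sq, Complex.normSq_div, Complex.div_re, ← add_div]
  refine div_le_div_of_nonneg_right ?_ hne.le
  simp [Complex.normSq_apply]
  nlinarith

/-- Peak functions: for disjoint compact subsets `A`, `D` of the circle with `A` null, there is a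
function analytic across the circle, bounded by `1`, close to `1` on `A`, to `0` on `D`, and to
`0` in the Hardy space.  It is `H / (1 + H)` where `H` is a combination of functions
`δ / (1 + δ - ζ̄ z)` with positive real part. -/
theorem exists_peak {A D : Set ℂ} (hA : IsCompact A) (hA1 : A ⊆ sphere 0 1)
    (hnull : circleNull A) (hD : IsCompact D) (hD1 : D ⊆ sphere 0 1) (hAD : Disjoint A D)
    {ε : ℝ} (hε : 0 < ε) :
    ∃ (w : ℂ → ℂ) (x : H2) (R : ℝ), 1 < R ∧ DifferentiableOn ℂ w (ball 0 R) ∧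
      Represents x w ∧ (∀ z, ‖z‖ ≤ 1 → ‖w z‖ ≤ 1) ∧ (∀ z ∈ A, ‖w z - 1‖ ≤ ε) ∧
      (∀ z ∈ D, ‖w z‖ ≤ ε) ∧ ‖x‖ ≤ ε := by
  -- `d` bounds from below the distance between `A` and `D`
  obtain ⟨d, hd, hdist⟩ := Metric.exists_pos_forall_lt_edist hA hD.isClosed hAD
  have hd' : (0 : ℝ) < d := hd
  set K : ℝ := 4 / ε with hK
  have hKpos : 0 < K := by positivity
  obtain ⟨t, δ, ht, hsum, hcov⟩ := exists_cover hA hA1 hnull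
    (η := min (ε * d / K) (ε ^ 2 / K)) (lt_min (by positivity) (by positivity))
  obtain ⟨m, hm, hmt⟩ := exists_pos_le_finset t δ fun x hx => (ht x hx).1
  set q : ℝ → ℂ → ℂ := fun x z =>
    1 + δ x - (starRingEnd ℂ) (Complex.exp (x * Complex.I)) * z with hq
  have hqre : ∀ x z, 1 + δ x - ‖z‖ ≤ (q x z).re := by
    intro x z
    have := Complex.re_le_norm ((starRingEnd ℂ) (Complex.exp (x * Complex.I)) * z)
    rw [norm_mul, RCLike.norm_conj, Complex.norm_exp_ofReal_mul_I, one_mul] at this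
    simp only [hq, Complex.sub_re, Complex.add_re, Complex.one_re, Complex.ofReal_re]
    linarith
  have hqpos : ∀ x ∈ t, ∀ z ∈ ball (0 : ℂ) (1 + m), 0 < (q x z).re := by
    intro x hx z hz
    have := hqre x z
    have h2 := hmt x hx
    rw [mem_ball_zero_iff] at hz
    linarith
  have hqne : ∀ x ∈ t, ∀ z ∈ ball (0 : ℂ) (1 + m), q x z ≠ 0 := by
    intro x hx z hz h
    have := hqpos x hx z hz
    rw [h] at this; simp at this
  set H : ℂ → ℂ := fun z => K * ∑ x ∈ t, δ x / q x z with hH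
  have hterm : ∀ x ∈ t, ∀ z ∈ ball (0 : ℂ) (1 + m), 0 ≤ ((δ x : ℂ) / q x z).re := by
    intro x hx z hz
    rw [div_eq_mul_inv, Complex.re_ofReal_mul, Complex.inv_re]
    have := hqpos x hx z hz
    have := (ht x hx).1
    have := Complex.normSq_nonneg (q x z)
    positivity
  have hHre : ∀ z ∈ ball (0 : ℂ) (1 + m), 0 ≤ (H z).re := by
    intro z hz
    simp only [hH, Complex.re_ofReal_mul, Complex.re_sum]
    exact mul_nonneg hKpos.le (Finset.sum_nonneg fun x hx => hterm x hx z hz)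
  have hHd : DifferentiableOn ℂ H (ball 0 (1 + m)) := by
    refine DifferentiableOn.const_mul (DifferentiableOn.fun_sum fun x hx => ?_) _
    refine DifferentiableOn.div (by fun_prop) (by fun_prop) (hqne x hx)
  have hne : ∀ z ∈ ball (0 : ℂ) (1 + m), 1 + H z ≠ 0 := by
    intro z hz h
    have := one_add_re_le_norm (H z)
    rw [h, norm_zero] at this
    linarith [hHre z hz]
  have hwd : DifferentiableOn ℂ (fun z => H z / (1 + H z)) (ball 0 (1 + m)) :=
    hHd.div (hHd.const_add 1) hne
  have hball : ∀ z : ℂ, ‖z‖ ≤ 1 → z ∈ ball (0 : ℂ) (1 + m) := fun z hz => by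
    rw [mem_ball_zero_iff]; linarith
  have hR : 1 < 1 + m := by linarith
  obtain ⟨x, hx, -⟩ := exists_represents hR hwd
  have hwle : ∀ z, ‖z‖ ≤ 1 → ‖H z / (1 + H z)‖ ≤ ‖H z‖ := by
    intro z hz
    have h1 := hHre z (hball z hz)
    have h2 := one_add_re_le_norm (H z)
    rw [norm_div]
    exact div_le_self (norm_nonneg _) (by linarith)
  -- `H` is small wherever the denominators are bounded below, because `∑ δ x` is small
  have hHle : ∀ z, ∀ c : ℝ, 0 < c → (∀ x ∈ t, c ≤ ‖q x z‖) →
      ‖H z‖ ≤ K * (∑ x ∈ t, δ x) / c := by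
    intro z c hc h
    simp only [hH, norm_mul, Complex.norm_real, Real.norm_of_nonneg hKpos.le]
    rw [mul_div_assoc, Finset.sum_div]
    refine mul_le_mul_of_nonneg_left ((norm_sum_le _ _).trans (Finset.sum_le_sum fun x hx => ?_))
      hKpos.le
    rw [norm_div, Complex.norm_real, Real.norm_of_nonneg (ht x hx).1.le]
    exact div_le_div_of_nonneg_left (ht x hx).1.le hc (h x hx)
  have hone_sub : ∀ (x : ℝ) (z : ℂ),
      ‖1 - (starRingEnd ℂ) (Complex.exp (x * Complex.I)) * z‖ =
        ‖z - Complex.exp (x * Complex.I)‖ := by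
    intro x z
    have h1 : Complex.exp (x * Complex.I) * (starRingEnd ℂ) (Complex.exp (x * Complex.I)) = 1 := by
      rw [Complex.mul_conj, Complex.normSq_eq_norm_sq, Complex.norm_exp_ofReal_mul_I]; simp
    have h2 : Complex.exp (x * Complex.I) *
        (1 - (starRingEnd ℂ) (Complex.exp (x * Complex.I)) * z) =
          -(z - Complex.exp (x * Complex.I)) := by
      rw [mul_sub, ← mul_assoc, h1]; ring
    rw [← norm_neg (z - _), ← h2, norm_mul, Complex.norm_exp_ofReal_mul_I, one_mul]
  refine ⟨fun z => H z / (1 + H z), x, 1 + m, hR, hwd, hx, fun z hz => ?_, fun z hz => ?_,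
    fun z hz => ?_, ?_⟩
  · have h1 := norm_sq_le_re_div (hHre z (hball z hz))
    have h2 := Complex.re_le_norm (H z / (1 + H z))
    nlinarith [norm_nonneg (H z / (1 + H z))]
  · have hz1 : ‖z‖ = 1 := by simpa using hA1 hz
    have hzb := hball z hz1.le
    obtain ⟨a, ha, haz⟩ := hcov z hz
    have hδ := (ht a ha).1
    have hq1 : δ a ≤ (q a z).re := by have := hqre a z; linarith
    -- near the centre of a disc of the cover, `δ / q` has real part at least `1 / 4`
    have hq2 : ‖q a z‖ ≤ 2 * δ a := by
      have e : q a z = δ a + (1 - (starRingEnd ℂ) (Complex.exp (a * Complex.I)) * z) := by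
        simp only [hq]; ring
      rw [e]
      refine (norm_add_le _ _).trans ?_
      rw [hone_sub, Complex.norm_real, Real.norm_of_nonneg hδ.le]
      linarith
    have hterm1 : 1 / 4 ≤ ((δ a : ℂ) / q a z).re := by
      rw [div_eq_mul_inv (δ a : ℂ), Complex.re_ofReal_mul, Complex.inv_re,
        Complex.normSq_eq_norm_sq]
      have hpos : 0 < ‖q a z‖ := norm_pos_iff.2 (hqne a ha z hzb)
      rw [← mul_div_assoc, div_le_div_iff₀ (by norm_num) (by positivity)]
      have : ‖q a z‖ ^ 2 ≤ (2 * δ a) ^ 2 := pow_le_pow_left₀ hpos.le hq2 2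
      nlinarith
    have hH4 : 1 / ε ≤ (H z).re := by
      have h3 := Finset.single_le_sum (f := fun x => ((δ x : ℂ) / q x z).re)
        (fun x hx => hterm x hx z hzb) ha
      simp only [hH, Complex.re_ofReal_mul, Complex.re_sum]
      have h4 := mul_le_mul_of_nonneg_left (hterm1.trans h3) hKpos.le
      refine le_trans (le_of_eq ?_) h4
      rw [hK]; ring
    have hn := one_add_re_le_norm (H z)
    have e : H z / (1 + H z) - 1 = -(1 / (1 + H z)) := by
      field_simp [hne z hzb]; ring
    rw [e, norm_neg, norm_div, norm_one]
    rw [div_le_iff₀ (by linarith [hHre z hzb])]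
    have : 1 / ε ≤ ‖1 + H z‖ := by linarith
    rw [div_le_iff₀ hε] at this
    linarith
  · have hz1 : ‖z‖ = 1 := by simpa using hD1 hz
    refine (hwle z hz1.le).trans ((hHle z d hd' fun a ha => ?_).trans ?_)
    · have h1 := hdist _ (ht a ha).2 z hz
      rw [edist_nndist, ENNReal.coe_lt_coe, ← NNReal.coe_lt_coe, coe_nndist, dist_comm,
        dist_eq_norm, ← hone_sub] at h1
      set u := 1 - (starRingEnd ℂ) (Complex.exp (a * Complex.I)) * z with hu
      have e : q a z = δ a + u := by simp only [hq, hu]; ring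
      have hure : 0 ≤ u.re := by
        have := hqre a z
        rw [e] at this; simp at this; linarith
      have hδ := (ht a ha).1
      have h2 : ‖u‖ ^ 2 ≤ ‖q a z‖ ^ 2 := by
        rw [e, ← Complex.normSq_eq_norm_sq, ← Complex.normSq_eq_norm_sq,
          Complex.normSq_apply, Complex.normSq_apply]
        simp
        nlinarith
      exact h1.le.trans ((pow_le_pow_iff_left₀ (norm_nonneg _) (norm_nonneg _) two_ne_zero).1 h2)
    · rw [div_le_iff₀ hd']
      have := hsum.trans (min_le_left _ _)
      rw [le_div_iff₀ hKpos] at this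
      linarith
  · have h1 := hx.norm_sq_le_re hR hwd fun z hz => norm_sq_le_re_div (hHre z (hball z hz.le))
    have h2 := Complex.re_le_norm (H 0 / (1 + H 0))
    have h3 := hwle 0 (by simp)
    have h4 := hHle 0 1 one_pos fun a ha => by
      have h5 := hqre a 0
      have h6 := Complex.re_le_norm (q a 0)
      rw [norm_zero] at h5
      linarith [(ht a ha).1]
    have h5 := hsum.trans (min_le_right _ _)
    rw [le_div_iff₀ hKpos] at h5
    exact (pow_le_pow_iff_left₀ (norm_nonneg _) hε.le two_ne_zero).1 (by linarith)

/-! ### Approximation on null sets by locally constant functions -/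

/-- Simultaneous approximation: finitely many values `a i`, prescribed on the pieces of a clopen
partition of a compact null set `E`, are approximated on `E` by a function analytic across the
circle that is small in the Hardy space.  The uniform bound `∑ ‖a i‖` does not depend on `ε`. -/
theorem exists_approx_of_partition {E : Set ℂ} (hE : IsCompact E) (hE1 : E ⊆ sphere 0 1)
    (hnull : circleNull E) {n : ℕ} {g : E → Fin n} (hg : Continuous g) (a : Fin n → ℂ)
    {ε : ℝ} (hε : 0 < ε) :
    ∃ (v : ℂ → ℂ) (x : H2) (R : ℝ), 1 < R ∧ DifferentiableOn ℂ v (ball 0 R) ∧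
      Represents x v ∧ (∀ z, ‖z‖ ≤ 1 → ‖v z‖ ≤ ∑ i, ‖a i‖) ∧
      (∀ z : E, ‖v z - a (g z)‖ ≤ ε) ∧ ‖x‖ ≤ ε := by
  have : CompactSpace E := isCompact_iff_compactSpace.1 hE
  set M := ∑ i, ‖a i‖ with hM
  have hM0 : 0 ≤ M := Finset.sum_nonneg fun _ _ => norm_nonneg _
  have hpiece : ∀ s : Set (Fin n), IsCompact (Subtype.val '' (g ⁻¹' s)) ∧
      Subtype.val '' (g ⁻¹' s) ⊆ E := fun s =>
    ⟨((isClosed_discrete s).preimage hg).isCompact.image continuous_subtype_val,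
      Subtype.coe_image_subset _ _⟩
  have key := fun i => exists_peak (A := Subtype.val '' (g ⁻¹' {i}))
    (D := Subtype.val '' (g ⁻¹' {i}ᶜ)) (hpiece _).1 ((hpiece _).2.trans hE1)
    (measure_mono_null (fun θ hθ => (hpiece {i}).2 hθ) hnull)
    (hpiece _).1 ((hpiece _).2.trans hE1)
    ((Set.disjoint_image_iff Subtype.val_injective).2
      (disjoint_compl_right.preimage g)) (show 0 < ε / (M + 1) by positivity)
  choose w x R hR hwd hrep hw1 hwA hwD hx using key
  obtain ⟨m, hm, hmR⟩ := exists_pos_le_finset Finset.univ (fun i => R i - 1)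
    fun i _ => sub_pos.2 (hR i)
  have hbound : M * (ε / (M + 1)) ≤ ε := by
    rw [← mul_div_assoc, div_le_iff₀ (by positivity)]; nlinarith
  refine ⟨fun z => ∑ i, a i * w i z, ∑ i, a i • x i, 1 + m, by linarith, ?_, ?_, ?_, ?_, ?_⟩
  · refine DifferentiableOn.fun_sum fun i _ => ((hwd i).mono (ball_subset_ball ?_)).const_mul _
    linarith [hmR i (Finset.mem_univ i)]
  · exact Represents.sum _ fun i _ => (hrep i).smul (a i)
  · intro z hz
    refine (norm_sum_le _ _).trans (Finset.sum_le_sum fun i _ => ?_)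
    rw [norm_mul]
    exact mul_le_of_le_one_right (norm_nonneg _) (hw1 i z hz)
  · intro z
    have e : ∑ i, a i * w i z - a (g z) = ∑ i, a i * (w i z - if g z = i then 1 else 0) := by
      simp [mul_sub, Finset.sum_sub_distrib]
    rw [e]
    refine le_trans ((norm_sum_le _ _).trans ?_) hbound
    rw [hM, Finset.sum_mul]
    refine Finset.sum_le_sum fun i _ => ?_
    rw [norm_mul]
    refine mul_le_mul_of_nonneg_left ?_ (norm_nonneg _)
    split_ifs with h
    · exact hwA i z ⟨z, h, rfl⟩
    · rw [sub_zero]; exact hwD i z ⟨z, h, rfl⟩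
  · refine le_trans ((norm_sum_le _ _).trans ?_) hbound
    rw [hM, Finset.sum_mul]
    refine Finset.sum_le_sum fun i _ => ?_
    rw [norm_smul]
    exact mul_le_mul_of_nonneg_left (hx i) (norm_nonneg _)

theorem isTotallyDisconnected_of_volume_zero {S : Set ℝ} (hS : volume S = 0) :
    IsTotallyDisconnected S := by
  intro t htS ht a ha b hb
  by_contra hne
  wlog hab : a < b generalizing a b
  · exact this hb ha (Ne.symm hne) (lt_of_le_of_ne (not_lt.1 hab) (Ne.symm hne))
  have h := measure_mono_null ((ht.Icc_subset ha hb).trans htS) hS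
  rw [Real.volume_Icc, ENNReal.ofReal_eq_zero] at h
  linarith

/-- A null subset of the circle is totally disconnected: cut the circle at a point outside the
set and look at arguments. -/
theorem isTotallyDisconnected_of_circleNull {E : Set ℂ} (hE1 : E ⊆ sphere 0 1)
    (hnull : circleNull E) : IsTotallyDisconnected E := by
  obtain ⟨α, hα⟩ : ∃ α : ℝ, Complex.exp (α * Complex.I) ∉ E := by
    by_contra! h
    have : {θ : ℝ | Complex.exp (θ * Complex.I) ∈ E} = Set.univ := Set.eq_univ_of_forall h
    rw [circleNull, this, Real.volume_univ] at hnull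
    exact ENNReal.top_ne_zero hnull
  set u : ℂ := Complex.exp ((α + Real.pi : ℝ) * Complex.I) with hu
  have hu' : u = -Complex.exp (α * Complex.I) := by
    rw [hu]; push_cast; rw [add_mul, Complex.exp_add, Complex.exp_pi_mul_I]; ring
  have hu0 : u ≠ 0 := Complex.exp_ne_zero _
  have hu1 : ‖u‖ = 1 := Complex.norm_exp_ofReal_mul_I _
  have hn : ∀ z ∈ E, ‖z / u‖ = 1 := fun z hz => by
    rw [norm_div, hu1, div_one]; simpa using hE1 hz
  have hexp : ∀ z ∈ E, Complex.exp ((Complex.arg (z / u) : ℂ) * Complex.I) = z / u := fun z hz => by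
    have := Complex.norm_mul_exp_arg_mul_I (z / u)
    rwa [hn z hz, Complex.ofReal_one, one_mul] at this
  have hcont : ContinuousOn (fun z => Complex.arg (z / u)) E := by
    intro z hz
    have hs : z / u ∈ Complex.slitPlane := by
      rw [Complex.mem_slitPlane_iff_arg]
      refine ⟨fun h => hα ?_, fun h => ?_⟩
      · have h2 := hexp z hz
        rw [h, Complex.exp_pi_mul_I, eq_div_iff hu0, hu'] at h2
        simpa [← h2] using hz
      · have := hn z hz
        rw [h, norm_zero] at this
        exact zero_ne_one this
    have hd : ContinuousAt (fun z : ℂ => z / u) z := by fun_prop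
    exact (ContinuousAt.comp (f := fun z : ℂ => z / u) (Complex.continuousAt_arg hs)
      hd).continuousWithinAt
  have himg : volume ((fun z => Complex.arg (z / u)) '' E) = 0 := by
    have h1 : volume ((fun θ : ℝ => θ + (α + Real.pi)) ⁻¹'
        {θ : ℝ | Complex.exp (θ * Complex.I) ∈ E}) = 0 := by
      rw [measure_preimage_add_right]; exact hnull
    refine measure_mono_null ?_ h1
    rintro _ ⟨z, hz, rfl⟩
    have h2 := hexp z hz
    have h3 : Complex.exp (((Complex.arg (z / u) + (α + Real.pi) : ℝ) : ℂ) * Complex.I) = z := by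
      rw [Complex.ofReal_add, add_mul, Complex.exp_add, h2, ← hu, div_mul_cancel₀ _ hu0]
    rw [Set.mem_preimage, Set.mem_ofPred_eq, h3]
    exact hz
  intro t htE ht x hx y hy
  have h := isTotallyDisconnected_of_volume_zero himg _ (Set.image_mono htE)
    (ht.image _ (hcont.mono htE)) ⟨x, hx, rfl⟩ ⟨y, hy, rfl⟩
  have h' := hexp x (htE hx)
  simp only at h
  rw [h, hexp y (htE hy)] at h'
  exact (div_left_inj' hu0).1 h'.symm

/-- A continuous function on a compact null subset of the circle is uniformly close to a
nonvanishing function with finitely many values, written in the form `exp (-a)`. -/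
theorem exists_partition {E : Set ℂ} (hE : IsCompact E) (hE1 : E ⊆ sphere 0 1)
    (hnull : circleNull E) (h : C(E, ℂ)) {ε : ℝ} (hε : 0 < ε) :
    ∃ (n : ℕ) (g : E → Fin n) (a : Fin n → ℂ), Continuous g ∧
      ∀ z, ‖Complex.exp (-a (g z)) - h z‖ ≤ ε := by
  have : CompactSpace E := isCompact_iff_compactSpace.1 hE
  have : TotallyDisconnectedSpace E :=
    totallyDisconnectedSpace_subtype_iff.2 (isTotallyDisconnected_of_circleNull hE1 hnull)
  have hS : {p : ℂ × ℂ | dist p.1 p.2 < ε / 2} ∈ nhdsSet (Set.diagonal ℂ) := by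
    refine IsOpen.mem_nhdsSet (isOpen_lt (by fun_prop) (by fun_prop)) |>.2 ?_
    rintro ⟨x, y⟩ (rfl : x = y)
    simpa using hε
  obtain ⟨n, g, b, hg, hb⟩ := h.exists_finite_approximation_of_mem_nhds_diagonal hS
  classical
  -- values equal to `0` have no logarithm and are replaced by `ε / 2`
  refine ⟨n, g, fun i => -Complex.log (if b i = 0 then (ε / 2 : ℝ) else b i), hg, fun z => ?_⟩
  have hz : dist (h z) (b (g z)) < ε / 2 := hb z
  rw [neg_neg, Complex.exp_log]
  · rw [dist_comm, dist_eq_norm] at hz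
    split_ifs with h0
    · rw [h0] at hz
      have e : ((ε / 2 : ℝ) : ℂ) - h z = (ε / 2 : ℝ) + (0 - h z) := by ring
      rw [e]
      refine (norm_add_le _ _).trans ?_
      rw [Complex.norm_real, Real.norm_of_nonneg (by positivity)]
      linarith
    · linarith
  · split_ifs with h0
    · exact_mod_cast (half_pos hε).ne'
    · exact h0

/-! ### Reflection of zeros and convergence of optimal approximants -/

/-- On the circle `|z - a| = |1 - ā z|`. -/
theorem norm_pmul_X_sub_C (a : ℂ) (G : H2) :
    ‖pmul (X - C a) G‖ = ‖pmul (1 - C ((starRingEnd ℂ) a) * X) G‖ := by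
  rw [pmul_sub, pmul_sub, pmul_C_mul, pmul_X, pmul_C, pmul_one]
  refine (pow_left_inj₀ (norm_nonneg _) (norm_nonneg _) two_ne_zero).1 ?_
  rw [norm_sub_sq (𝕜 := ℂ), norm_sub_sq (𝕜 := ℂ), inner_smul_right, inner_smul_right, norm_smul,
    norm_smul, shift.norm_map, RCLike.norm_conj, ← inner_conj_symm G (shift G), ← map_mul,
    RCLike.conj_re]

theorem exists_outer_of_multiset (s : Multiset ℂ) (hs : ∀ a ∈ s, ‖a‖ ≠ 1) :
    ∃ P : ℂ[X], (∀ z, ‖z‖ ≤ 1 → P.eval z ≠ 0) ∧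
      ∀ G, ‖pmul (s.map fun a => X - C a).prod G‖ = ‖pmul P G‖ := by
  induction s using Multiset.induction_on with
  | empty => exact ⟨1, by simp, by simp⟩
  | cons a s ih =>
    obtain ⟨P, hP, hn⟩ := ih fun b hb => hs b (Multiset.mem_cons_of_mem hb)
    have ha := hs a (Multiset.mem_cons_self a s)
    rcases lt_or_gt_of_ne ha with h | h
    · refine ⟨P * (1 - C ((starRingEnd ℂ) a) * X), fun z hz => ?_, fun G => ?_⟩
      · rw [eval_mul]
        refine mul_ne_zero (hP z hz) fun h0 => ?_
        have h1 : (1 : ℂ) = (starRingEnd ℂ) a * z := by simpa [sub_eq_zero] using h0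
        have h2 := congrArg norm h1
        rw [norm_one, norm_mul, RCLike.norm_conj] at h2
        nlinarith [norm_nonneg z, norm_nonneg a]
      · rw [Multiset.map_cons, Multiset.prod_cons, pmul_mul, pmul_comm, hn, pmul_comm,
          norm_pmul_X_sub_C, pmul_comm, ← pmul_mul]
    · refine ⟨P * (X - C a), fun z hz => ?_, fun G => ?_⟩
      · rw [eval_mul]
        refine mul_ne_zero (hP z hz) fun h0 => ?_
        have h1 : z = a := by simpa [sub_eq_zero] using h0
        rw [h1] at hz; linarith
      · rw [Multiset.map_cons, Multiset.prod_cons, pmul_mul, pmul_comm, hn, ← pmul_mul]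

/-- Reflecting the roots of `p` in the unit disc across the circle gives a polynomial without
zeros in the closed disc and with the same modulus as `p` on the circle. -/
theorem exists_outer {p : ℂ[X]} (hroots : ∀ z, ‖z‖ = 1 → p.eval z ≠ 0) :
    ∃ P : ℂ[X], (∀ z, ‖z‖ ≤ 1 → P.eval z ≠ 0) ∧ ∀ G, ‖pmul p G‖ = ‖pmul P G‖ := by
  have hp : p ≠ 0 := by
    rintro rfl; exact hroots 1 (by simp) (by simp)
  obtain ⟨P, hP, hn⟩ := exists_outer_of_multiset p.roots fun a ha h =>
    hroots a h ((mem_roots hp).1 ha)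
  have hsp := (IsAlgClosed.splits p).eq_prod_roots
  refine ⟨C p.leadingCoeff * P, fun z hz => ?_, fun G => ?_⟩
  · rw [eval_mul, eval_C]
    exact mul_ne_zero (leadingCoeff_ne_zero.2 hp) (hP z hz)
  · conv_lhs => rw [hsp]
    rw [pmul_C_mul, pmul_C_mul, norm_smul, norm_smul, hn]

theorem inner_e0 (x : H2) : inner ℂ x e0 = (starRingEnd ℂ) (x 0) := by
  rw [e0, lp.inner_single_right]; simp

/-- Polarization. -/
theorem inner_pmul_of_norm {p P : ℂ[X]} (h : ∀ G, ‖pmul p G‖ = ‖pmul P G‖) (x y : H2) :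
    inner ℂ (pmul p x) (pmul p y) = inner ℂ (pmul P x) (pmul P y) := by
  rw [inner_eq_sum_norm_sq_div_four, inner_eq_sum_norm_sq_div_four]
  simp only [← map_add, ← map_sub, ← map_smul, h]

/-- Replacing `p` by a polynomial `P` of the same modulus on the circle only multiplies the optimal
approximants of `p γ` by a constant, since the normal equations depend on `p` only through that
modulus and the value at `0`. -/
theorem opa_of_norm {p P : ℂ[X]} (h : ∀ G, ‖pmul p G‖ = ‖pmul P G‖) {γ : H2} {c : ℂ}
    (hc : p.eval 0 = c * P.eval 0) (hf : pmul p γ ≠ 0) (n : ℕ) :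
    opa n (pmul p γ) = C ((starRingEnd ℂ) c) * opa n (pmul P γ) := by
  have hF : pmul P γ ≠ 0 := by
    rw [← norm_ne_zero_iff, ← h]; exact norm_ne_zero_iff.2 hf
  have hQ := isOpa_iff.1 (isOpa_opa n hF)
  refine opa_eq hf (isOpa_iff.2 ⟨?_, fun q hq => ?_⟩)
  · refine (degree_mul_le _ _).trans ?_
    calc _ ≤ 0 + (opa n (pmul P γ)).degree := by gcongr; exact degree_C_le
      _ ≤ _ := by rw [zero_add]; exact hQ.1
  · rw [pmul_C_mul, inner_smul_right, pmul_comm q, pmul_comm _ p, inner_pmul_of_norm h,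
      pmul_comm P, pmul_comm P, hQ.2 q hq, pmul_comm p, inner_e0, inner_e0, pmul_zero_coeff,
      pmul_zero_coeff, pmul_zero_coeff, pmul_zero_coeff, hc]
    simp only [map_mul]
    ring

/-- On polynomials of degree at most `n`, the uniform norm on the closed disc is at most `n + 1` times
the Hardy norm. -/
theorem norm_eval_le {n : ℕ} {q : ℂ[X]} (hq : q.degree ≤ (n : WithBot ℕ)) {z : ℂ} (hz : ‖z‖ ≤ 1) :
    ‖q.eval z‖ ≤ ((n : ℝ) + 1) * ‖pmul q e0‖ := by
  have hc : ∀ k, q.coeff k = pmul q e0 k := by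
    intro k
    rw [coeff_pmul, coeffMul, Finset.sum_range_succ, Finset.sum_eq_zero]
    · simp [e0_apply]
    · intro j hj
      have := Finset.mem_range.1 hj
      rw [e0_apply, if_neg (by omega), mul_zero]
  rw [eval_eq_sum_range' (Nat.lt_succ_of_le (natDegree_le_iff_degree_le.2 hq))]
  refine (norm_sum_le _ _).trans ((Finset.sum_le_card_nsmul _ _ ‖pmul q e0‖ fun k _ => ?_).trans ?_)
  · rw [norm_mul, norm_pow, hc]
    exact (mul_le_of_le_one_right (norm_nonneg _) (pow_le_one₀ (norm_nonneg _) hz)).trans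
      (lp.norm_apply_le_norm (by norm_num) _ k)
  · simp

/-- If `F` is analytic and zero free on a neighbourhood of the closed disc, its optimal
approximants converge to `1 / F` uniformly on the closed disc.  They are compared with the Taylor
polynomials of `1 / F`, whose remainders decay faster than the factor `n + 1` lost in passing from
the Hardy norm to the uniform norm. -/
theorem opa_tendsto {f : H2} {F : ℂ → ℂ} {R : ℝ} (hR : 1 < R)
    (hF : DifferentiableOn ℂ F (ball 0 R)) (hf : Represents f F)
    (hne : ∀ z, ‖z‖ ≤ 1 → F z ≠ 0) {ε : ℝ} (hε : 0 < ε) :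
    ∃ N, ∀ n ≥ N, ∀ z, ‖z‖ ≤ 1 → ‖(opa n f).eval z - (F z)⁻¹‖ ≤ ε := by
  have hf0 : f ≠ 0 := by
    rintro rfl
    exact hne 0 (by simp) ((hf.2 0 (by simp)).unique (Represents.zero.2 0 (by simp)))
  have hopen : IsOpen (ball (0 : ℂ) R ∩ F ⁻¹' {0}ᶜ) :=
    hF.continuousOn.isOpen_inter_preimage isOpen_ball isOpen_compl_singleton
  obtain ⟨δ, hδ, hsub⟩ := (isCompact_closedBall (0 : ℂ) 1).exists_thickening_subset_open hopen
    (fun z hz => ⟨closedBall_subset_ball hR hz, hne z (by simpa using hz)⟩)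
  rw [thickening_closedBall hδ zero_le_one] at hsub
  obtain ⟨u, hu, hus⟩ := exists_represents (F := fun z => (F z)⁻¹) (show 1 < δ + 1 by linarith)
    ((hF.mono (hsub.trans Set.inter_subset_left)).inv fun z hz => (hsub hz).2)
  obtain ⟨M, hM⟩ := (isCompact_closedBall (0 : ℂ) 1).exists_bound_of_continuousOn hf.continuousOn
  obtain ⟨B, hB⟩ := (isCompact_closedBall (0 : ℂ) 1).exists_bound_of_continuousOn hu.continuousOn
  have hM' : ∀ z, ‖z‖ ≤ 1 → ‖F z‖ ≤ M := fun z hz => hM z (by simpa using hz)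
  have hB' : ∀ z, ‖z‖ ≤ 1 → ‖(F z)⁻¹‖ ≤ B := fun z hz => hB z (by simpa using hz)
  have hM0 : 0 ≤ M := (norm_nonneg _).trans (hM' 0 (by simp))
  have hB0 : 0 ≤ B := (norm_nonneg _).trans (hB' 0 (by simp))
  -- `τ n` bounds the remainder of the Taylor polynomial `T` of degree `n` of `1 / F`, and `σ n`
  -- bounds `(n + 1) * τ n`
  set τ : ℕ → ℝ := fun n => ∑' k, ‖u (k + (n + 1))‖ with hτ
  have hτ0 : ∀ n, 0 ≤ τ n := fun n => tsum_nonneg fun _ => norm_nonneg _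
  set σ : ℕ → ℝ := fun n => ∑' k, (((k + (n + 1) : ℕ) : ℝ) + 1) * ‖u (k + (n + 1))‖ with hσ
  have hστ : ∀ n : ℕ, ((n : ℝ) + 1) * τ n ≤ σ n := by
    intro n
    simp only [hσ, hτ]
    rw [← tsum_mul_left]
    refine Summable.tsum_le_tsum (fun k => ?_)
      (((summable_nat_add_iff (n + 1)).2 hu.1).mul_left _) ((summable_nat_add_iff (n + 1)).2 hus)
    refine mul_le_mul_of_nonneg_right ?_ (norm_nonneg _)
    push_cast
    have : (0 : ℝ) ≤ k := k.cast_nonneg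
    linarith
  have hσlim : Tendsto σ atTop (nhds 0) :=
    (tendsto_add_atTop_iff_nat 1).2
      (tendsto_sum_nat_add fun k : ℕ => ((k : ℝ) + 1) * ‖u k‖)
  have hlim : Tendsto (fun n => (2 * B * M + 1) * σ n) atTop (nhds 0) := by
    simpa using hσlim.const_mul (2 * B * M + 1)
  obtain ⟨N, hN⟩ := eventually_atTop.1 (hlim.eventually (gt_mem_nhds hε))
  refine ⟨N, fun n hn z hz => ?_⟩
  set T : ℂ[X] := ∑ k ∈ Finset.range (n + 1), monomial k (u k) with hT
  have hTdeg : T.degree ≤ (n : WithBot ℕ) := by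
    refine (degree_sum_le _ _).trans (Finset.sup_le fun k hk => (degree_monomial_le _ _).trans ?_)
    exact_mod_cast Nat.lt_succ_iff.1 (Finset.mem_range.1 hk)
  have hTU : ∀ z, ‖z‖ ≤ 1 → ‖T.eval z - (F z)⁻¹‖ ≤ τ n := by
    intro z hz
    have h1 := (hasSum_nat_add_iff' (n + 1)).2 (hu.2 z hz)
    have h2 : T.eval z = ∑ k ∈ Finset.range (n + 1), u k * z ^ k := by
      simp [hT, Polynomial.eval_finsetSum]
    rw [norm_sub_rev, h2, ← h1.tsum_eq]
    refine tsum_of_norm_bounded ((summable_nat_add_iff (n + 1)).2 hu.1).hasSum fun k => ?_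
    rw [norm_mul, norm_pow]
    exact mul_le_of_le_one_right (norm_nonneg _) (pow_le_one₀ (norm_nonneg _) hz)
  have hTf : ‖pmul T f - e0‖ ≤ M * τ n := by
    refine ((hf.pmul T).sub Represents.one).norm_le_const (mul_nonneg hM0 (hτ0 n)) fun z hz => ?_
    have e : T.eval z * F z - 1 = F z * (T.eval z - (F z)⁻¹) := by
      rw [mul_sub, mul_inv_cancel₀ (hne z hz.le)]; ring
    rw [e, norm_mul]
    exact mul_le_mul (hM' z hz.le) (hTU z hz.le) (norm_nonneg _) hM0
  have hQ := isOpa_opa n hf0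
  have hQT : ‖pmul (opa n f - T) f‖ ≤ 2 * (M * τ n) := by
    have h1 := hQ.2 T hTdeg
    rw [h2ErrNorm_eq, h2ErrNorm_eq] at h1
    have e : pmul (opa n f - T) f = (pmul (opa n f) f - e0) - (pmul T f - e0) := by
      rw [pmul_sub]; abel
    rw [e]
    refine (norm_sub_le _ _).trans ?_
    linarith
  have hq : ‖pmul (opa n f - T) e0‖ ≤ B * ‖pmul (opa n f - T) f‖ := by
    refine (Represents.one.pmul _).norm_le (hf.pmul _) hB0 fun z hz => ?_
    rw [mul_one, norm_mul]
    have h1 : 1 ≤ B * ‖F z‖ := by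
      have := mul_le_mul_of_nonneg_right (hB' z hz.le) (norm_nonneg (F z))
      rwa [← norm_mul, inv_mul_cancel₀ (hne z hz.le), norm_one] at this
    nlinarith [norm_nonneg ((opa n f - T).eval z)]
  have hev := norm_eval_le (q := opa n f - T) (n := n)
    ((degree_sub_le _ _).trans (max_le hQ.1 hTdeg)) hz
  have e : (opa n f).eval z - (F z)⁻¹ = (opa n f - T).eval z + (T.eval z - (F z)⁻¹) := by
    rw [eval_sub]; ring
  rw [e]
  have hn0 : (0 : ℝ) ≤ n := n.cast_nonneg
  calc _ ≤ ((n : ℝ) + 1) * (B * (2 * (M * τ n))) + τ n := by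
        refine (norm_add_le _ _).trans (add_le_add (hev.trans ?_) (hTU z hz))
        refine mul_le_mul_of_nonneg_left (hq.trans ?_) (by positivity)
        exact mul_le_mul_of_nonneg_left hQT hB0
    _ ≤ (2 * B * M + 1) * (((n : ℝ) + 1) * τ n) := by nlinarith [hτ0 n, mul_nonneg hn0 (hτ0 n)]
    _ ≤ (2 * B * M + 1) * σ n := by
        exact mul_le_mul_of_nonneg_left (hστ n) (by positivity)
    _ ≤ ε := (hN n hn).le

/-! ### Density -/

/-- The Taylor series converges in the Hardy norm. -/
theorem hasSum_pmul_X_pow (f : H2) : HasSum (fun k => f k • pmul (X ^ k) e0) f := by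
  have h : ∀ k, f k • pmul (X ^ k) e0 = lp.single 2 k (f k) := by
    intro k
    apply h2_ext
    intro n
    rw [lp.single_apply, lp.coeFn_smul, Pi.smul_apply, coeff_pmul, coeffMul]
    rcases eq_or_ne n k with rfl | hn
    · rw [Finset.sum_range_succ, Finset.sum_eq_zero]
      · simp [e0_apply]
      · intro j hj
        rw [coeff_X_pow, if_neg (Finset.mem_range.1 hj).ne, zero_mul]
    · rw [Pi.single_eq_of_ne hn, Finset.sum_eq_zero, smul_zero]
      intro j hj
      have := Finset.mem_range.1 hj
      rw [coeff_X_pow, e0_apply]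
      split_ifs <;> simp
      omega
  simp only [h]
  exact lp.hasSum_single (by norm_num) f

/-- Polynomials without zeros at the origin and on the circle are dense in the Hardy space:
perturb the constant coefficient of a Taylor polynomial and dilate. -/
theorem exists_polynomial (f₀ : H2) {ε : ℝ} (hε : 0 < ε) :
    ∃ p : ℂ[X], p.eval 0 ≠ 0 ∧ (∀ z, ‖z‖ = 1 → p.eval z ≠ 0) ∧ ‖pmul p e0 - f₀‖ < ε := by
  obtain ⟨f, hf0, hf⟩ : ∃ f : H2, f 0 ≠ 0 ∧ ‖f - f₀‖ < ε := by
    by_cases h : f₀ 0 = 0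
    · refine ⟨f₀ + ((ε / 2 : ℝ) : ℂ) • e0, ?_, ?_⟩
      · rw [lp.coeFn_add, Pi.add_apply, lp.coeFn_smul, Pi.smul_apply, h, e0_apply]
        simp [hε.ne']
      · rw [add_sub_cancel_left, norm_smul, Represents.norm_one, Complex.norm_real,
          Real.norm_of_nonneg (half_pos hε).le]
        linarith
    · exact ⟨f₀, h, by simpa using hε⟩
  have h1 := ((hasSum_pmul_X_pow f).tendsto_sum_nat.sub_const f₀).norm
  obtain ⟨n, hn, hn1⟩ := ((h1.eventually (gt_mem_nhds hf)).and (eventually_ge_atTop 1)).exists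
  -- dilation `p t` of a Taylor polynomial; for `t ≠ 1` near `1` it has no zero on the circle
  set p : ℝ → ℂ[X] := fun t => ∑ k ∈ Finset.range n, C (f k * (t : ℂ) ^ k) * X ^ k with hp
  have hev : ∀ t z, (p t).eval z = (p 1).eval (t * z) := by
    intro t z
    simp [hp, Polynomial.eval_finsetSum, mul_pow, mul_assoc]
  have h0 : ∀ t, (p t).eval 0 = f 0 := by
    intro t
    rw [hp, Polynomial.eval_finsetSum, Finset.sum_eq_single 0]
    · simp
    · intro k _ hk; simp [hk]
    · intro h; exact absurd (Finset.mem_range.2 hn1) h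
  have hpm : ∀ t, pmul (p t) e0 = ∑ k ∈ Finset.range n, (f k * (t : ℂ) ^ k) • pmul (X ^ k) e0 := by
    intro t
    have hs : ∀ s : Finset ℕ, pmul (∑ k ∈ s, C (f k * (t : ℂ) ^ k) * X ^ k) e0 =
        ∑ k ∈ s, (f k * (t : ℂ) ^ k) • pmul (X ^ k) e0 := by
      intro s
      induction s using Finset.induction_on with
      | empty => simp [pmul]
      | insert a s ha ih => rw [Finset.sum_insert ha, Finset.sum_insert ha, pmul_add, ih, pmul_C_mul]
    exact hs _
  have hcont : Continuous fun t => ‖pmul (p t) e0 - f₀‖ := by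
    simp only [hpm]; fun_prop
  have hlt : ‖pmul (p 1) e0 - f₀‖ < ε := by simpa [hpm] using hn
  have hp1 : p 1 ≠ 0 := by
    intro h
    apply hf0; rw [← h0 1, h, eval_zero]
  -- moduli of the zeros of `p 1`
  set S : Set ℝ := (fun a : ℂ => ‖a‖) '' (p 1).rootSet ℂ with hS
  have hSf : S.Finite := ((p 1).rootSet_finite ℂ).image _
  have e1 : ∀ᶠ t : ℝ in nhdsWithin 1 {1}ᶜ, ‖pmul (p t) e0 - f₀‖ < ε :=
    nhdsWithin_le_nhds (hcont.continuousAt.eventually (gt_mem_nhds hlt))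
  have e2 : ∀ᶠ t : ℝ in nhdsWithin 1 {1}ᶜ, 0 < t :=
    nhdsWithin_le_nhds (lt_mem_nhds one_pos)
  have e3 : ∀ᶠ t : ℝ in nhdsWithin 1 {1}ᶜ, t ∉ S \ {1} :=
    nhdsWithin_le_nhds ((hSf.subset Set.sdiff_subset).isClosed.isOpen_compl.mem_nhds (by simp))
  obtain ⟨t, ⟨⟨ht1, ht2⟩, ht3⟩, ht4⟩ :=
    (((e1.and e2).and e3).and eventually_mem_nhdsWithin).exists
  refine ⟨p t, by rw [h0]; exact hf0, fun z hz hz0 => ht3 ⟨⟨t * z, ?_, ?_⟩, ht4⟩, ht1⟩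
  · rw [mem_rootSet]
    refine ⟨hp1, ?_⟩
    rw [hev] at hz0
    simpa using hz0
  · simp [hz, ht2.le]

/-- Near every `f₀` there is an `f` all of whose optimal approximants of large order are close on the
null set `E` to a given continuous function `h`.  It is `f = p * exp v`, with `p` a polynomial close
to `f₀`, and with `v` small in `H²` and such that `exp (-v)` is close to `P h / c̄` on `E`, where `P`
is `p` with its zeros reflected out of the disc and `c = p(0) / P(0)`. -/
theorem exists_universal_approx {E : Set ℂ} (hE : IsCompact E) (hE1 : E ⊆ sphere 0 1)
    (hnull : circleNull E) (h : C(E, ℂ)) (f₀ : H2) {ε : ℝ} (hε : 0 < ε) :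
    ∃ f : H2, f ≠ 0 ∧ ‖f - f₀‖ < ε ∧
      ∃ N, ∀ n ≥ N, ∀ z : E, ‖(opa n f).eval (z : ℂ) - h z‖ ≤ ε := by
  obtain ⟨p, hp0, hp1, hpf⟩ := exists_polynomial f₀ (half_pos hε)
  obtain ⟨P, hP, hnorm⟩ := exists_outer hp1
  have hE1' : ∀ z : E, ‖(z : ℂ)‖ ≤ 1 := fun z => by simpa using (hE1 z.2).le
  set c : ℂ := p.eval 0 / P.eval 0 with hc
  have hP0 : P.eval 0 ≠ 0 := hP 0 (by simp)
  have hcP : p.eval 0 = c * P.eval 0 := (div_mul_cancel₀ _ hP0).symm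
  have hc0 : (starRingEnd ℂ) c ≠ 0 := by
    rw [Ne, map_eq_zero]; exact div_ne_zero hp0 hP0
  obtain ⟨B, hB⟩ := (isCompact_closedBall (0 : ℂ) 1).exists_bound_of_continuousOn
    (f := fun z => (starRingEnd ℂ) c * (P.eval z)⁻¹)
    (continuousOn_const.mul (P.continuous.continuousOn.inv₀ fun z hz => hP z (by simpa using hz)))
  have hB' : ∀ z, ‖z‖ ≤ 1 → ‖(starRingEnd ℂ) c * (P.eval z)⁻¹‖ ≤ B :=
    fun z hz => hB z (by simpa using hz)
  have hB0 : 0 ≤ B := (norm_nonneg _).trans (hB' 0 (by simp))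
  -- the function that `exp (-v)` has to approximate on `E`
  set h' : C(E, ℂ) := ⟨fun z => P.eval (z : ℂ) * h z / (starRingEnd ℂ) c, by fun_prop⟩ with hh'
  obtain ⟨m, g, a, hg, ha⟩ := exists_partition hE hE1 hnull h'
    (show 0 < ε / (4 * (B + 1)) by positivity)
  -- `M` bounds `|v|` on the closed disc whatever the accuracy `ε₂`, so `K` may enter its choice
  set M := ∑ i, ‖a i‖ with hM
  set K := Real.exp M + 1 with hK
  have hM0 : 0 ≤ M := Finset.sum_nonneg fun _ _ => norm_nonneg _
  have hK2 : 2 ≤ K := by linarith [Real.one_le_exp hM0]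
  set ε₂ := min 1 (min (ε / (8 * (B + 1) * K)) (ε / (4 * (‖pmul p‖ + 1) * K))) with hε₂
  have hε₂0 : 0 < ε₂ := lt_min one_pos (lt_min (by positivity) (by positivity))
  obtain ⟨v, x, R, hR, hvd, hxv, hvM, hva, hx⟩ := exists_approx_of_partition hE hE1 hnull hg a hε₂0
  have hs1 : ε₂ ≤ 1 := min_le_left _ _
  have hs2 : (B + 1) * (K * (2 * ε₂)) ≤ ε / 4 := by
    have : ε₂ ≤ ε / (8 * (B + 1) * K) := (min_le_right _ _).trans (min_le_left _ _)
    rw [le_div_iff₀ (by positivity)] at this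
    linarith
  have hs3 : (‖pmul p‖ + 1) * (K * ε₂) ≤ ε / 4 := by
    have : ε₂ ≤ ε / (4 * (‖pmul p‖ + 1) * K) := (min_le_right _ _).trans (min_le_right _ _)
    rw [le_div_iff₀ (by positivity)] at this
    linarith
  have hed : DifferentiableOn ℂ (fun z => Complex.exp (v z)) (ball 0 R) := hvd.cexp
  -- `γ` is `exp v`; pointwise `|exp v - 1| ≤ K |v|`, so it is close to `1` in the Hardy space
  obtain ⟨γ, hγ, -⟩ := exists_represents hR hed
  have hγ1 : ‖γ - e0‖ ≤ K * ε₂ := by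
    refine ((hγ.sub Represents.one).norm_le hxv (by positivity) fun z hz => ?_).trans
      (mul_le_mul_of_nonneg_left hx (by positivity))
    rcases le_total ‖v z‖ 1 with h1 | h1
    · exact (Complex.norm_exp_sub_one_le h1).trans
        (mul_le_mul_of_nonneg_right hK2 (norm_nonneg _))
    · refine le_trans ?_ (le_mul_of_one_le_right (by positivity) h1)
      refine (norm_sub_le _ _).trans ?_
      rw [norm_one, hK]
      gcongr
      exact (Complex.norm_exp_le_exp_norm _).trans (Real.exp_le_exp.2 (hvM z hz.le))
  have hF := hγ.pmul P
  have hFne : ∀ z, ‖z‖ ≤ 1 → P.eval z * Complex.exp (v z) ≠ 0 := fun z hz =>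
    mul_ne_zero (hP z hz) (Complex.exp_ne_zero _)
  have hF0 : pmul P γ ≠ 0 := by
    intro h0
    rw [h0] at hF
    exact hFne 0 (by simp) ((hF.2 0 (by simp)).unique (Represents.zero.2 0 (by simp)))
  have hf0 : pmul p γ ≠ 0 := by
    rw [← norm_ne_zero_iff, hnorm]; exact norm_ne_zero_iff.2 hF0
  obtain ⟨N, hN⟩ := opa_tendsto hR (F := fun z => P.eval z * Complex.exp (v z))
    (P.differentiable.differentiableOn.mul hed) hF hFne
    (show 0 < ε / (4 * (‖c‖ + 1)) by positivity)
  refine ⟨pmul p γ, hf0, ?_, N, fun n hn z => ?_⟩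
  · have e : pmul p γ - f₀ = pmul p (γ - e0) + (pmul p e0 - f₀) := by rw [map_sub]; abel
    rw [e]
    refine (norm_add_le _ _).trans_lt ?_
    have h1 := (pmul p).le_opNorm (γ - e0)
    have h2 := mul_le_mul_of_nonneg_left hγ1 (norm_nonneg (pmul p))
    have h3 : 0 ≤ K * ε₂ := by positivity
    linarith
  · rw [opa_of_norm hnorm hcP hf0, eval_mul, eval_C]
    have h1 := hN n hn z (hE1' z)
    have hPz := hP z (hE1' z)
    set w := Complex.exp (-v z) with hw
    have e : (starRingEnd ℂ) c * (opa n (pmul P γ)).eval (z : ℂ) - h z =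
        (starRingEnd ℂ) c *
          ((opa n (pmul P γ)).eval (z : ℂ) - (P.eval (z : ℂ) * Complex.exp (v z))⁻¹) +
        (starRingEnd ℂ) c * (P.eval (z : ℂ))⁻¹ *
          ((w - Complex.exp (-a (g z))) + (Complex.exp (-a (g z)) - h' z)) := by
      have e2 : h' z = P.eval (z : ℂ) * h z / (starRingEnd ℂ) c := rfl
      rw [e2, mul_inv, ← Complex.exp_neg, ← hw]
      field_simp
      ring
    have h2 : ‖w - Complex.exp (-a (g z))‖ ≤ K * (2 * ε₂) := by
      have e3 : w - Complex.exp (-a (g z)) =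
          Complex.exp (-a (g z)) * (Complex.exp (-(v z - a (g z))) - 1) := by
        rw [hw, mul_sub, ← Complex.exp_add, mul_one]; congr 2; ring
      have h4 : ‖-(v z - a (g z))‖ ≤ ε₂ := by rw [norm_neg]; exact hva z
      rw [e3, norm_mul]
      refine mul_le_mul ?_ ((Complex.norm_exp_sub_one_le (h4.trans hs1)).trans (by linarith))
        (norm_nonneg _) (by positivity)
      refine (Complex.norm_exp_le_exp_norm _).trans ((Real.exp_le_exp.2 ?_).trans
        (by rw [hK]; linarith))
      rw [norm_neg]
      exact Finset.single_le_sum (f := fun i => ‖a i‖) (fun _ _ => norm_nonneg _)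
        (Finset.mem_univ _)
    rw [e]
    refine (norm_add_le _ _).trans ?_
    have t1 : ‖(starRingEnd ℂ) c *
        ((opa n (pmul P γ)).eval (z : ℂ) - (P.eval (z : ℂ) * Complex.exp (v z))⁻¹)‖ ≤ ε / 4 := by
      rw [norm_mul, RCLike.norm_conj]
      refine (mul_le_mul_of_nonneg_left h1 (norm_nonneg c)).trans ?_
      rw [← mul_div_assoc, div_le_iff₀ (by positivity)]
      nlinarith [norm_nonneg c]
    have t2 : ‖(starRingEnd ℂ) c * (P.eval (z : ℂ))⁻¹ *
        ((w - Complex.exp (-a (g z))) + (Complex.exp (-a (g z)) - h' z))‖ ≤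
        (B + 1) * (K * (2 * ε₂) + ε / (4 * (B + 1))) := by
      rw [norm_mul]
      refine mul_le_mul ((hB' z (hE1' z)).trans (by linarith)) ((norm_add_le _ _).trans
        (add_le_add h2 (ha z))) (norm_nonneg _) (by linarith)
    have t3 : (B + 1) * (ε / (4 * (B + 1))) = ε / 4 := by field_simp
    rw [mul_add (B + 1), t3] at t2
    linarith

/-! ### Continuity of optimal approximants and Baire category -/

/-- Gram matrix of `f, z f, …, zⁿ f` in the Hardy space. -/
def gram (n : ℕ) (f : H2) : Matrix (Fin (n + 1)) (Fin (n + 1)) ℂ :=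
  Matrix.of fun j k => inner ℂ (pmul (X ^ (j : ℕ)) f) (pmul (X ^ (k : ℕ)) f)

theorem pmul_sum (n : ℕ) (x : Fin (n + 1) → ℂ) (f : H2) :
    pmul (∑ k, C (x k) * X ^ (k : ℕ)) f = ∑ k, x k • pmul (X ^ (k : ℕ)) f := by
  have hs : ∀ s : Finset (Fin (n + 1)), pmul (∑ k ∈ s, C (x k) * X ^ (k : ℕ)) f =
      ∑ k ∈ s, x k • pmul (X ^ (k : ℕ)) f := by
    intro s
    induction s using Finset.induction_on with
    | empty => simp [pmul]
    | insert a s ha ih => rw [Finset.sum_insert ha, Finset.sum_insert ha, pmul_add, ih, pmul_C_mul]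
  exact hs _

theorem gram_mulVec (n : ℕ) (f : H2) (x : Fin (n + 1) → ℂ) (j : Fin (n + 1)) :
    (gram n f).mulVec x j =
      inner ℂ (pmul (X ^ (j : ℕ)) f) (pmul (∑ k, C (x k) * X ^ (k : ℕ)) f) := by
  rw [pmul_sum, inner_sum]
  simp only [Matrix.mulVec, dotProduct, gram, Matrix.of_apply, inner_smul_right]
  exact Finset.sum_congr rfl fun k _ => mul_comm _ _

/-- Linear independence of `f, z f, …, zⁿ f`. -/
theorem gram_det_ne_zero (n : ℕ) {f : H2} (hf : f ≠ 0) : (gram n f).det ≠ 0 := by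
  intro h
  obtain ⟨x, hx, hx0⟩ := Matrix.exists_mulVec_eq_zero_iff.2 h
  set q : ℂ[X] := ∑ k, C (x k) * X ^ (k : ℕ) with hq
  have h1 : inner ℂ (pmul q f) (pmul q f) = 0 := by
    conv_lhs => arg 2; rw [hq, pmul_sum]
    rw [sum_inner]
    refine Finset.sum_eq_zero fun j _ => ?_
    rw [inner_smul_left, ← gram_mulVec, hx0, Pi.zero_apply, mul_zero]
  have h2 : q = 0 := pmul_inj hf (inner_self_eq_zero.1 h1)
  refine hx (funext fun j => ?_)
  have h3 : q.coeff j = x j := by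
    rw [hq, Polynomial.finsetSum_coeff, Finset.sum_eq_single j]
    · simp
    · intro k _ hk
      rw [coeff_C_mul_X_pow, if_neg fun h => hk (Fin.ext h.symm)]
    · simp
  rw [← h3, h2]; rfl

theorem opa_eq_sum (n : ℕ) {f : H2} (hf : f ≠ 0) :
    opa n f = ∑ k : Fin (n + 1), C ((opa n f).coeff k) * X ^ (k : ℕ) := by
  have h := ((isOpa_iff).1 (isOpa_opa n hf)).1
  conv_lhs => rw [(opa n f).as_sum_range_C_mul_X_pow'
    (n := n + 1) (Nat.lt_succ_of_le (natDegree_le_of_degree_le h))]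
  rw [Finset.sum_range]

/-- Cramer's rule for the normal equations of the optimal approximant. -/
theorem opa_coeff (n : ℕ) {f : H2} (hf : f ≠ 0) (k : Fin (n + 1)) :
    (opa n f).coeff k = (gram n f).det⁻¹ *
      (gram n f).adjugate.mulVec (fun j => inner ℂ (pmul (X ^ (j : ℕ)) f) e0) k := by
  have h1 : (gram n f).mulVec (fun k => (opa n f).coeff k) =
      fun j : Fin (n + 1) => inner ℂ (pmul (X ^ (j : ℕ)) f) e0 := by
    funext j
    rw [gram_mulVec, ← opa_eq_sum n hf]
    refine ((isOpa_iff).1 (isOpa_opa n hf)).2 _ ?_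
    rw [degree_X_pow]
    exact_mod_cast Nat.lt_succ_iff.1 j.2
  rw [← h1, Matrix.mulVec_mulVec, Matrix.adjugate_mul, Matrix.smul_mulVec, Matrix.one_mulVec,
    Pi.smul_apply, smul_eq_mul, inv_mul_cancel_left₀ (gram_det_ne_zero n hf)]

theorem continuousOn_opa_coeff (n : ℕ) (k : Fin (n + 1)) :
    ContinuousOn (fun f : H2 => (opa n f).coeff k) {f | f ≠ 0} := by
  have hA : Continuous fun f : H2 => gram n f :=
    continuous_matrix fun j k => by simp only [gram, Matrix.of_apply]; fun_prop
  have hb : Continuous fun (f : H2) (j : Fin (n + 1)) =>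
      (inner ℂ (pmul (X ^ (j : ℕ)) f) e0 : ℂ) := by fun_prop
  have h1 : Continuous fun f : H2 => (gram n f).adjugate.mulVec
      (fun j => inner ℂ (pmul (X ^ (j : ℕ)) f) e0) k :=
    (continuous_apply k).comp (hA.matrix_adjugate.matrix_mulVec hb)
  exact ((hA.matrix_det.continuousOn.inv₀ fun f hf => gram_det_ne_zero n hf).mul
    h1.continuousOn).congr fun f hf => opa_coeff n hf k

theorem continuousOn_opa (E : Set ℂ) [CompactSpace E] (n : ℕ) :
    ContinuousOn (fun f : H2 => (opa n f).toContinuousMapOn E) {f | f ≠ 0} := by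
  have h : ContinuousOn (fun f : H2 => ∑ k : Fin (n + 1),
      (opa n f).coeff k • ((X : ℂ[X]) ^ (k : ℕ)).toContinuousMapOn E) {f | f ≠ 0} :=
    continuousOn_finsetSum _ fun k _ => (continuousOn_opa_coeff n k).smul continuousOn_const
  refine h.congr fun f hf => ?_
  ext z
  dsimp only
  rw [ContinuousMap.coe_sum, Finset.sum_apply]
  simp only [ContinuousMap.smul_apply, toContinuousMapOn_apply, toContinuousMap_apply, eval_pow,
    eval_X, smul_eq_mul]
  conv_lhs => rw [opa_eq_sum n hf]
  simp [Polynomial.eval_finsetSum]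

/-- The functions one of whose optimal approximants of order at least `N` lies within `ε` of `g`
on `E`. -/
def nearSet (E : Set ℂ) [CompactSpace E] (g : C(E, ℂ)) (ε : ℝ) (N : ℕ) : Set H2 :=
  ⋃ n ≥ N, {f | f ≠ 0} ∩ (fun f : H2 => (opa n f).toContinuousMapOn E) ⁻¹' ball g ε

theorem isOpen_nearSet (E : Set ℂ) [CompactSpace E] (g : C(E, ℂ)) (ε : ℝ) (N : ℕ) :
    IsOpen (nearSet E g ε N) :=
  isOpen_biUnion fun n _ =>
    (continuousOn_opa E n).isOpen_inter_preimage isOpen_ne isOpen_ball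

theorem dense_nearSet {E : Set ℂ} [CompactSpace E] (hE1 : E ⊆ sphere 0 1) (hnull : circleNull E)
    (g : C(E, ℂ)) {ε : ℝ} (hε : 0 < ε) (N : ℕ) : Dense (nearSet E g ε N) := by
  refine Metric.dense_iff.2 fun f₀ r hr => ?_
  obtain ⟨f, hf0, hf, M, hM⟩ := exists_universal_approx (isCompact_iff_compactSpace.2 ‹_›) hE1
    hnull g f₀ (lt_min hr (half_pos hε))
  refine ⟨f, mem_ball_iff_norm.2 (hf.trans_le (min_le_left _ _)), ?_⟩
  refine Set.mem_biUnion (show max N M ≥ N from le_max_left _ _) ⟨hf0, ?_⟩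
  rw [Set.mem_preimage, mem_ball, ContinuousMap.dist_lt_iff hε]
  intro z
  rw [dist_eq_norm]
  exact (hM _ (le_max_right _ _) z).trans_lt ((min_le_right _ _).trans_lt (half_lt_self hε))

/-- Universality means that the optimal approximants come arbitrarily close to each member of a
dense sequence of continuous functions, at arbitrarily high order. -/
theorem universal_iff {E : Set ℂ} [CompactSpace E] (f : H2) :
    (f ≠ 0 ∧ HasUniversalOpa E f) ↔
      ∀ i j N : ℕ, f ∈ nearSet E (TopologicalSpace.denseSeq C(E, ℂ) i) (1 / (j + 1)) N := by
  constructor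
  · rintro ⟨hf, hu⟩ i j N
    set g := TopologicalSpace.denseSeq C(E, ℂ) i
    -- only the values of `G` on `E` matter
    set G : ℂ → ℂ := Function.extend Subtype.val g 0 with hG
    have hGg : ∀ z : E, G z = g z := fun z => Subtype.val_injective.extend_apply _ _ z
    obtain ⟨m, hm, hlim⟩ := hu G (continuousOn_iff_continuous_domRestrict.2
      (g.continuous.congr fun z => (hGg z).symm))
    have hj : (0 : ℝ) < 1 / (j + 1) := by positivity
    obtain ⟨s, hs1, hs2⟩ := ((Metric.tendstoUniformlyOn_iff.1 hlim _ hj).and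
      (eventually_ge_atTop N)).exists
    refine Set.mem_biUnion (show m s ≥ N from hs2.trans hm.le_apply) ⟨hf, ?_⟩
    rw [Set.mem_preimage, mem_ball, ContinuousMap.dist_lt_iff hj]
    intro z
    rw [← hGg z, dist_comm]
    exact hs1 z z.2
  · intro h
    have hf : f ≠ 0 := by
      obtain ⟨n, -, hn⟩ := Set.mem_iUnion₂.1 (h 0 0 0)
      exact hn.1
    refine ⟨hf, fun G hG => ?_⟩
    set g : C(E, ℂ) := ⟨E.domRestrict G, continuousOn_iff_continuous_domRestrict.1 hG⟩
    have key : ∀ s N : ℕ, ∃ n > N, dist ((opa n f).toContinuousMapOn E) g < 1 / ((s : ℝ) + 1) := by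
      intro s N
      have hs : (0 : ℝ) < 1 / ((s : ℝ) + 1) := by positivity
      obtain ⟨j, hj⟩ := exists_nat_one_div_lt (half_pos hs)
      obtain ⟨i, hi⟩ := (TopologicalSpace.denseRange_denseSeq C(E, ℂ)).exists_dist_lt g (half_pos hs)
      obtain ⟨n, hn, hn2⟩ := Set.mem_iUnion₂.1 (h i j (N + 1))
      refine ⟨n, hn, ?_⟩
      have h2 := mem_ball.1 hn2.2
      rw [dist_comm] at hi
      linarith [dist_triangle ((opa n f).toContinuousMapOn E)
        (TopologicalSpace.denseSeq C(E, ℂ) i) g]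
    obtain ⟨m, hm, hm2⟩ := extraction_forall_of_frequently
      (P := fun s n => dist ((opa n f).toContinuousMapOn E) g < 1 / ((s : ℝ) + 1))
      fun s => frequently_atTop'.2 (key s)
    refine ⟨m, hm, Metric.tendstoUniformlyOn_iff.2 fun ε hε => ?_⟩
    obtain ⟨j, hj⟩ := exists_nat_one_div_lt hε
    filter_upwards [eventually_ge_atTop j] with s hs z hz
    rw [dist_comm]
    refine ((ContinuousMap.dist_apply_le_dist (⟨z, hz⟩ : E)).trans_lt (hm2 s)).trans_le
      (le_trans ?_ hj.le)
    gcongr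

/-- If `E ⊆ 𝕋` is closed of arc-length measure zero, then the set of
functions in `H²` with universal optimal polynomial approximants on `E` is a dense
`G_δ` subset of `H²`. -/
theorem universalOpa_isGdelta_and_dense (E : Set ℂ) (hE : E ⊆ sphere (0 : ℂ) 1)
    (hEclosed : IsClosed E) (hEnull : circleNull E) :
    IsGδ {f : H2 | f ≠ 0 ∧ HasUniversalOpa E f} ∧
      Dense {f : H2 | f ≠ 0 ∧ HasUniversalOpa E f} := by
  have : CompactSpace E :=
    isCompact_iff_compactSpace.1 ((isCompact_sphere 0 1).of_isClosed_subset hEclosed hE)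
  have h : {f : H2 | f ≠ 0 ∧ HasUniversalOpa E f} = ⋂ t : ℕ × ℕ × ℕ,
      nearSet E (TopologicalSpace.denseSeq C(E, ℂ) t.1) (1 / (t.2.1 + 1)) t.2.2 := by
    ext f
    rw [Set.mem_ofPred_eq, universal_iff, Set.mem_iInter, Prod.forall]
    exact forall_congr' fun i => by rw [Prod.forall]
  rw [h]
  exact ⟨IsGδ.iInter_of_isOpen fun t => isOpen_nearSet _ _ _ _,
    dense_iInter_of_isOpen (fun t => isOpen_nearSet _ _ _ _)
      fun t => dense_nearSet hE hEnull _ (by positivity) _⟩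

end
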